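/- arXiv:1501.02618 — 4 statements merged into one kernel-verified Lean document; each statement's English description precedes it below -/
import Mathlib

section
/- There exist absolute constants 0 < c ≤ C such that for all 1 < x ≤ y and t > 0 with xy < t and y² ≥ 16·t, one has c·(ln x / ln(3t/y))·p(t,x,y) ≤ p₁(t,x,y) ≤ C·(ln x / ln(3t/y))·p(t,x,y). -/
open Real MeasureTheory

/-- Modified Bessel function of the first kind, order 0. -/
noncomputable def I0 (z : ℝ) : ℝ := ∑' n : ℕ, (z/2)^(2*n) / ((n.factorial : ℝ))^2

/-- Modified Bessel function of the first kind, order 1. -/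
noncomputable def I1 (z : ℝ) : ℝ :=
  ∑' n : ℕ, (z/2)^(2*n+1) / ((n.factorial : ℝ) * ((n+1).factorial : ℝ))

/-- Heat kernel of the Bessel operator `d²/dx² + (1/x) d/dx` on `(0,∞)`
with respect to the measure `y dy`. -/
noncomputable def pk (t x y : ℝ) : ℝ :=
  t⁻¹ * Real.exp (-(x^2 + y^2)/(2*t)) * I0 (x*y/t)

/-- The function `h` from (AC): Dirichlet heat kernel of `(1/2) d²/dx²` on `(1,∞)`
multiplied by `(xy)⁻¹`. -/
noncomputable def hker (t x y : ℝ) : ℝ :=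
  (2*Real.pi*t)^(-(1:ℝ)/2) * (x*y)⁻¹ *
    (Real.exp (-(x-y)^2/(2*t)) - Real.exp (-(x+y-2)^2/(2*t)))

/-- Bundled hypotheses on the Dirichlet heat kernel `p₁` of the Bessel operator on
`(1,∞)` and on the density `q` of the first hitting time of `1` by the
2-dimensional Bessel process. -/
structure BesselHK (p₁ : ℝ → ℝ → ℝ → ℝ) (q : ℝ → ℝ → ℝ) : Prop where
  meas_p₁ : Measurable fun z : ℝ × ℝ × ℝ => p₁ z.1 z.2.1 z.2.2
  meas_q : Measurable fun z : ℝ × ℝ => q z.1 z.2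
  p₁_nonneg : ∀ ⦃t x y : ℝ⦄, 0 < t → 1 < x → 1 < y → 0 ≤ p₁ t x y
  q_nonneg : ∀ ⦃x s : ℝ⦄, 1 < x → 0 < s → 0 ≤ q x s
  hunt : ∀ ⦃t x y : ℝ⦄, 0 < t → 1 < x → 1 < y →
    p₁ t x y = pk t x y - ∫ u in Set.Ioo 0 t, q x u * pk (t-u) 1 y
  symm : ∀ ⦃t x y : ℝ⦄, 0 < t → 1 < x → 1 < y → p₁ t x y = p₁ t y x
  ck : ∀ ⦃t s x y : ℝ⦄, 0 < t → 0 < s → 1 < x → 1 < y →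
    p₁ (t+s) x y = ∫ w in Set.Ioi (1:ℝ), p₁ t x w * p₁ s w y * w
  mass : ∀ ⦃t x : ℝ⦄, 0 < t → 1 < x →
    (∫ y in Set.Ioi (1:ℝ), p₁ t x y * y) = ∫ u in Set.Ioi t, q x u
  q1 : ∃ c C : ℝ, 0 < c ∧ c ≤ C ∧ ∀ ⦃x s : ℝ⦄, 1 < x → 0 < s →
    ((s < 2*x →
      c * (((x-1)/Real.sqrt x) * s^(-(3:ℝ)/2) * Real.exp (-(x-1)^2/(2*s))) ≤ q x s ∧
      q x s ≤ C * (((x-1)/Real.sqrt x) * s^(-(3:ℝ)/2) * Real.exp (-(x-1)^2/(2*s)))) ∧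
     (2*x ≤ s →
      c * (((x-1)/x) * ((1+Real.log x)/((1+Real.log (s+x))*(1+Real.log (1+s/x)))) *
        s⁻¹ * Real.exp (-(x-1)^2/(2*s))) ≤ q x s ∧
      q x s ≤ C * (((x-1)/x) * ((1+Real.log x)/((1+Real.log (s+x))*(1+Real.log (1+s/x)))) *
        s⁻¹ * Real.exp (-(x-1)^2/(2*s)))))
  q2 : ∀ ⦃x s : ℝ⦄, 1 < x → 0 < s →
    ((x-1)/Real.sqrt (2*Real.pi*x)) * s^(-(3:ℝ)/2) * Real.exp (-(x-1)^2/(2*s)) ≤ q x s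
  surv : ∃ c' C' : ℝ, 0 < c' ∧ c' ≤ C' ∧ ∀ ⦃t x : ℝ⦄, 0 < t → 1 < x →
    c' * min 1 (Real.log x / Real.log (1+Real.sqrt t)) ≤ (∫ u in Set.Ioi t, q x u) ∧
    (∫ u in Set.Ioi t, q x u) ≤ C' * min 1 (Real.log x / Real.log (1+Real.sqrt t))
  ac : ∀ ⦃t x y : ℝ⦄, 0 < t → 1 < x → 1 < y →
    Real.sqrt (x*y) * hker t x y ≤ p₁ t x y ∧
    p₁ t x y ≤ Real.exp (t/8) * Real.sqrt (x*y) * hker t x y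

/-!
Let `r = t / y` and let `τ` be the hitting time of `1` from `x`, with density `q x`. Hunt's formula
expresses `p₁ t x y` as `pk t x y` minus the expectation of `pk (t - τ) 1 y` over `τ < t`. Since
`y ^ 2 ≥ 16 t`, the Gaussian factor dominates the time dependence of the free kernel:
`pk (t - u) 1 y / pk t 1 y` is at most `exp (-3 u / (16 r ^ 2))` and, for `u ≤ t / 2`, at least
`exp (-2 u / r ^ 2)`. So the relative loss `1 - pk (t - τ) 1 y / pk t 1 y` is bounded below when
`τ > r ^ 2` and is at most `2 min (τ, r ^ 2) / r ^ 2`. The survival estimate turns these into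
`P(τ > r ^ 2) ≈ log x / log (1 + r)` and `E[min (τ, r ^ 2)] = ∫_0^{r ^ 2} P(τ > v) dv`, which is
`O(r ^ 2 log x / log (1 + r))` by concavity of the logarithm. Replacing `pk t 1 y` by `pk t x y`
changes the kernel by a relative amount of only `O((x ^ 2 - 1) / r ^ 2)`.

The argument needs `P(τ < ∞) = 1`, which the survival estimate alone does not give: by the mass
identity `P(τ > t)` is the mass of `p₁ t x`, and the small-time comparison with the killed Gaussian
kernel sends it to `1` as `t → 0`.
-/

/-! ### The Bessel functions `I0` and `I1` -/

lemma le_exp_sub_mul_of_hasDerivAt {f f' g g' : ℝ → ℝ} {a b : ℝ} (hab : a ≤ b)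
    (hf : ∀ z, HasDerivAt f (f' z) z) (hg : ∀ z, HasDerivAt g (g' z) z)
    (hle : ∀ z ∈ Set.Ioo a b, f' z ≤ g' z * f z) : f b ≤ exp (g b - g a) * f a := by
  have hderiv (z : ℝ) : HasDerivAt (fun z => exp (-g z) * f z)
      (exp (-g z) * -g' z * f z + exp (-g z) * f' z) z := (hg z).neg.exp.mul (hf z)
  have hanti : AntitoneOn (fun z => exp (-g z) * f z) (Set.Icc a b) := by
    refine antitoneOn_of_deriv_nonpos (convex_Icc a b)
      (fun z _ => (hderiv z).continuousAt.continuousWithinAt)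
      (fun z _ => (hderiv z).differentiableAt.differentiableWithinAt) fun z hz => ?_
    rw [interior_Icc] at hz
    rw [(hderiv z).deriv]
    linear_combination exp (-g z) * hle z hz
  calc f b = exp (g b) * (exp (-g b) * f b) := by rw [← mul_assoc, ← exp_add]; simp
    _ ≤ exp (g b) * (exp (-g a) * f a) :=
        mul_le_mul_of_nonneg_left (hanti ⟨le_rfl, hab⟩ ⟨hab, le_rfl⟩ hab) (exp_nonneg _)
    _ = exp (g b - g a) * f a := by rw [← mul_assoc, ← exp_add, sub_eq_add_neg]

lemma exp_sub_mul_le_of_hasDerivAt {f f' g g' : ℝ → ℝ} {a b : ℝ} (hab : a ≤ b)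
    (hf : ∀ z, HasDerivAt f (f' z) z) (hg : ∀ z, HasDerivAt g (g' z) z)
    (hle : ∀ z ∈ Set.Ioo a b, g' z * f z ≤ f' z) : exp (g b - g a) * f a ≤ f b := by
  have := le_exp_sub_mul_of_hasDerivAt hab (fun z => (hf z).fun_neg) hg
    fun z hz => by simpa only [mul_neg, neg_le_neg_iff] using hle z hz
  linarith

lemma summable_I0 (z : ℝ) : Summable fun n : ℕ => (z / 2) ^ (2 * n) / (n.factorial : ℝ) ^ 2 := by
  refine .of_nonneg_of_le (fun n => by rw [pow_mul]; positivity) (fun n => ?_)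
    (summable_pow_div_factorial ((z / 2) ^ 2))
  have : (1 : ℝ) ≤ n.factorial := mod_cast n.factorial_pos
  rw [pow_mul]
  gcongr
  nlinarith

lemma summable_I1 (z : ℝ) : Summable fun n : ℕ =>
    (z / 2) ^ (2 * n + 1) / ((n.factorial : ℝ) * ((n + 1).factorial : ℝ)) := by
  refine .of_norm_bounded ((summable_I0 z).mul_left |z / 2|) fun n => ?_
  rw [norm_div, norm_of_nonneg (by positivity : (0 : ℝ) ≤ n.factorial * (n + 1).factorial),
    pow_succ', norm_mul, norm_eq_abs, norm_of_nonneg (by rw [pow_mul]; positivity), mul_div_assoc,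
    sq (n.factorial : ℝ)]
  gcongr
  · rw [pow_mul]; positivity
  · exact n.le_succ

lemma I0_eq_one_add (z : ℝ) :
    I0 z = 1 + ∑' n : ℕ, (z / 2) ^ (2 * (n + 1)) / ((n + 1).factorial : ℝ) ^ 2 := by
  rw [I0, (summable_I0 z).tsum_eq_zero_add]
  simp

lemma hasDerivAt_I0 (z : ℝ) : HasDerivAt I0 (I1 z) z := by
  have hterm (n : ℕ) (w : ℝ) :
      HasDerivAt (fun w : ℝ => (w / 2) ^ (2 * (n + 1)) / ((n + 1).factorial : ℝ) ^ 2)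
        ((w / 2) ^ (2 * n + 1) / ((n.factorial : ℝ) * ((n + 1).factorial : ℝ))) w := by
    have h := (((hasDerivAt_id' w).div_const 2).fun_pow (2 * (n + 1))).div_const
      (((n + 1).factorial : ℝ) ^ 2)
    refine h.congr_deriv ?_
    rw [show 2 * (n + 1) - 1 = 2 * n + 1 by lia, Nat.factorial_succ]
    push_cast
    field_simp
  have hbound (n : ℕ) (w : ℝ) (hw : w ∈ Metric.ball (0 : ℝ) (|z| + 1)) :
      ‖(w / 2) ^ (2 * n + 1) / ((n.factorial : ℝ) * ((n + 1).factorial : ℝ))‖ ≤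
        ((|z| + 1) / 2) ^ (2 * n + 1) / ((n.factorial : ℝ) * ((n + 1).factorial : ℝ)) := by
    rw [mem_ball_zero_iff, norm_eq_abs] at hw
    rw [norm_div, norm_pow, norm_div, norm_eq_abs w, norm_of_nonneg (zero_le_two (α := ℝ)),
      norm_of_nonneg (by positivity : (0 : ℝ) ≤ n.factorial * (n + 1).factorial)]
    gcongr
  have hz : z ∈ Metric.ball (0 : ℝ) (|z| + 1) := by simp
  have hderiv := hasDerivAt_tsum_of_isPreconnected
    (summable_I1 (|z| + 1)) Metric.isOpen_ball
    (convex_ball (0 : ℝ) (|z| + 1)).isPreconnected (fun n w _ => hterm n w) hbound hz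
    ((summable_nat_add_iff 1).2 (summable_I0 z)) hz
  rw [funext I0_eq_one_add]
  exact hderiv.const_add 1

lemma continuous_I0 : Continuous I0 :=
  continuous_iff_continuousAt.2 fun z => (hasDerivAt_I0 z).continuousAt

lemma one_le_I0 (z : ℝ) : 1 ≤ I0 z := by
  rw [I0_eq_one_add, le_add_iff_nonneg_right]
  exact tsum_nonneg fun n => by rw [pow_mul]; positivity

lemma half_le_I1 {z : ℝ} (hz : 0 ≤ z) : z / 2 ≤ I1 z := by
  simpa [I1] using (summable_I1 z).le_tsum 0 fun n _ => by positivity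

lemma I1_le_half_mul_I0 {z : ℝ} (hz : 0 ≤ z) : I1 z ≤ z / 2 * I0 z := by
  rw [I1, I0, ← tsum_mul_left]
  refine (summable_I1 z).tsum_le_tsum (fun n => ?_) ((summable_I0 z).mul_left _)
  rw [pow_succ', mul_div_assoc, sq (n.factorial : ℝ)]
  gcongr
  exact n.le_succ

lemma I1_le_I0 (z : ℝ) : I1 z ≤ I0 z := by
  have hsum := summable_I0 z
  have hsum_succ := (summable_nat_add_iff 1).2 hsum
  have hamgm (n : ℕ) : (z / 2) ^ (2 * n + 1) / ((n.factorial : ℝ) * ((n + 1).factorial : ℝ)) ≤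
      1 / 2 * ((z / 2) ^ (2 * n) / (n.factorial : ℝ) ^ 2 +
        (z / 2) ^ (2 * (n + 1)) / ((n + 1).factorial : ℝ) ^ 2) := by
    linear_combination (1 / 2) * two_mul_le_add_sq ((z / 2) ^ n / (n.factorial : ℝ))
      ((z / 2) ^ (n + 1) / ((n + 1).factorial : ℝ))
  have htsum := (summable_I1 z).tsum_le_tsum hamgm ((hsum.add hsum_succ).mul_left _)
  rw [tsum_mul_left, hsum.tsum_add hsum_succ] at htsum
  have hsplit := I0_eq_one_add z
  unfold I0 I1 at *
  linarith

lemma I0_le_exp_sub_mul_I0 {a b : ℝ} (hab : a ≤ b) : I0 b ≤ exp (b - a) * I0 a :=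
  le_exp_sub_mul_of_hasDerivAt hab hasDerivAt_I0 hasDerivAt_id
    fun z _ => by simpa using I1_le_I0 z

lemma hasDerivAt_sq_div (c z : ℝ) : HasDerivAt (fun z : ℝ => z ^ 2 / c) (2 * z / c) z := by
  simpa using (hasDerivAt_pow 2 z).div_const c

lemma I0_le_exp_sq_sub_sq_mul_I0 {a b : ℝ} (ha : 0 ≤ a) (hab : a ≤ b) :
    I0 b ≤ exp ((b ^ 2 - a ^ 2) / 4) * I0 a := by
  rw [sub_div]
  refine le_exp_sub_mul_of_hasDerivAt hab hasDerivAt_I0 (hasDerivAt_sq_div 4) fun z hz => ?_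
  convert I1_le_half_mul_I0 (ha.trans hz.1.le) using 2
  ring

lemma I0_zero : I0 0 = 1 := by simp [I0_eq_one_add]

lemma I0_le_two {z : ℝ} (hz : 0 ≤ z) (hz1 : z ≤ 1) : I0 z ≤ 2 := by
  have hexp : exp ((z ^ 2 - 0 ^ 2) / 4) ≤ 2 := by
    rw [← le_log_iff_exp_le two_pos]
    nlinarith [log_two_gt_d9]
  simpa only [I0_zero, mul_one] using
    (I0_le_exp_sq_sub_sq_mul_I0 le_rfl hz).trans (by simpa only [I0_zero, mul_one] using hexp)

lemma exp_sq_sub_sq_mul_I0_le_I0 {a b : ℝ} (ha : 0 ≤ a) (hab : a ≤ b) (hb : b ≤ 1) :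
    exp ((b ^ 2 - a ^ 2) / 8) * I0 a ≤ I0 b := by
  rw [sub_div]
  refine exp_sub_mul_le_of_hasDerivAt hab hasDerivAt_I0 (hasDerivAt_sq_div 8) fun z hz => ?_
  have hz0 : 0 ≤ z := ha.trans hz.1.le
  calc 2 * z / 8 * I0 z ≤ 2 * z / 8 * 2 := by
        gcongr
        exact I0_le_two hz0 (hz.2.le.trans hb)
    _ = z / 2 := by ring
    _ ≤ I1 z := half_le_I1 hz0

lemma I0_le_I0 {a b : ℝ} (ha : 0 ≤ a) (hab : a ≤ b) : I0 a ≤ I0 b := by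
  simpa using exp_sub_mul_le_of_hasDerivAt hab hasDerivAt_I0 (fun z => hasDerivAt_const z 0)
    fun z hz => by linarith [half_le_I1 (ha.trans hz.1.le), hz.1]

/-! ### The free heat kernel -/

lemma pk_pos {t : ℝ} (ht : 0 < t) (x y : ℝ) : 0 < pk t x y :=
  mul_pos (mul_pos (inv_pos.2 ht) (exp_pos _)) (zero_lt_one.trans_le (one_le_I0 _))

lemma measurable_pk_left (x y : ℝ) : Measurable fun t => pk t x y :=
  (measurable_id.inv.mul (by fun_prop)).mul (continuous_I0.measurable.comp (by fun_prop))

lemma pk_le_exp_mul_pk {s t x y : ℝ} (hs : 0 < s) (hst : s ≤ t) (hxy : 0 ≤ x * y) :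
    pk s x y ≤ exp ((t - (x - y) ^ 2 / 2) * (1 / s - 1 / t)) * pk t x y := by
  have ht : 0 < t := hs.trans_le hst
  set D := 1 / s - 1 / t with hD
  have hinv : s⁻¹ ≤ exp (t * D) * t⁻¹ := by
    rw [← div_eq_mul_inv, le_div_iff₀ ht]
    calc s⁻¹ * t = t * D + 1 := by rw [hD]; field_simp; ring
      _ ≤ exp (t * D) := add_one_le_exp _
  have hgauss : exp (-(x ^ 2 + y ^ 2) / (2 * s)) =
      exp (-(x ^ 2 + y ^ 2) / 2 * D) * exp (-(x ^ 2 + y ^ 2) / (2 * t)) := by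
    rw [← exp_add, hD]; congr 1; field_simp; ring
  have hI0 : I0 (x * y / s) ≤ exp (x * y * D) * I0 (x * y / t) := by
    convert I0_le_exp_sub_mul_I0 (div_le_div_of_nonneg_left hxy hs hst) using 3
    rw [hD]; ring
  calc pk s x y ≤ exp (t * D) * t⁻¹ *
        (exp (-(x ^ 2 + y ^ 2) / 2 * D) * exp (-(x ^ 2 + y ^ 2) / (2 * t))) *
        (exp (x * y * D) * I0 (x * y / t)) := by
        rw [pk, hgauss]
        gcongr
        exact zero_le_one.trans (one_le_I0 _)
    _ = exp (t * D) * exp (-(x ^ 2 + y ^ 2) / 2 * D) * exp (x * y * D) * pk t x y := by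
        rw [pk]; ring
    _ = exp ((t - (x - y) ^ 2 / 2) * D) * pk t x y := by
        rw [← exp_add, ← exp_add]; ring_nf

lemma exp_mul_pk_le_pk {s t x y : ℝ} (hs : 0 < s) (hst : s ≤ t) (hxy : 0 ≤ x * y) :
    exp (-((x ^ 2 + y ^ 2) / 2 * (1 / s - 1 / t))) * pk t x y ≤ pk s x y := by
  have ht : 0 < t := hs.trans_le hst
  have hgauss : exp (-(x ^ 2 + y ^ 2) / (2 * s)) =
      exp (-((x ^ 2 + y ^ 2) / 2 * (1 / s - 1 / t))) * exp (-(x ^ 2 + y ^ 2) / (2 * t)) := by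
    rw [← exp_add]; congr 1; field_simp; ring
  have hI0 : I0 (x * y / t) ≤ I0 (x * y / s) :=
    I0_le_I0 (by positivity) (div_le_div_of_nonneg_left hxy hs hst)
  calc exp (-((x ^ 2 + y ^ 2) / 2 * (1 / s - 1 / t))) * pk t x y
      = t⁻¹ * exp (-(x ^ 2 + y ^ 2) / (2 * s)) * I0 (x * y / t) := by rw [pk, hgauss]; ring
    _ ≤ pk s x y := by
        rw [pk]
        gcongr
        exact zero_le_one.trans (one_le_I0 _)

lemma pk_le_pk_of_le {t a b y : ℝ} (ht : 0 < t) (hy : 0 ≤ y) (ha : 0 ≤ a) (hab : a ≤ b)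
    (hby : b * y ≤ t) (hty : 4 * t ≤ y ^ 2) : pk t a y ≤ pk t b y := by
  have hI0 := exp_sq_sub_sq_mul_I0_le_I0 (by positivity : 0 ≤ a * y / t)
    (by gcongr : a * y / t ≤ b * y / t) ((div_le_one ht).2 hby)
  have hgauss : -(a ^ 2 + y ^ 2) / (2 * t) ≤
      -(b ^ 2 + y ^ 2) / (2 * t) + ((b * y / t) ^ 2 - (a * y / t) ^ 2) / 8 := by
    have h : -(b ^ 2 + y ^ 2) / (2 * t) + ((b * y / t) ^ 2 - (a * y / t) ^ 2) / 8
        - -(a ^ 2 + y ^ 2) / (2 * t) = (b ^ 2 - a ^ 2) * (y ^ 2 - 4 * t) / (8 * t ^ 2) := by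
      field_simp; ring
    have : 0 ≤ (b ^ 2 - a ^ 2) * (y ^ 2 - 4 * t) / (8 * t ^ 2) :=
      div_nonneg (mul_nonneg (by nlinarith) (by linarith)) (by positivity)
    linarith
  calc pk t a y ≤ t⁻¹ * exp (-(b ^ 2 + y ^ 2) / (2 * t) +
        ((b * y / t) ^ 2 - (a * y / t) ^ 2) / 8) * I0 (a * y / t) := by
        rw [pk]
        gcongr
        exact zero_le_one.trans (one_le_I0 _)
    _ = t⁻¹ * exp (-(b ^ 2 + y ^ 2) / (2 * t)) *
        (exp (((b * y / t) ^ 2 - (a * y / t) ^ 2) / 8) * I0 (a * y / t)) := by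
        rw [exp_add]; ring
    _ ≤ pk t b y := by rw [pk]; gcongr

lemma pk_le_exp_mul_pk_of_le {t a b y : ℝ} (ht : 0 < t) (hy : 0 < y) (ha : 0 ≤ a) (hab : a ≤ b) :
    pk t b y ≤ exp ((b ^ 2 - a ^ 2) / (4 * (t / y) ^ 2)) * pk t a y := by
  have hI0 : I0 (b * y / t) ≤ exp ((b ^ 2 - a ^ 2) / (4 * (t / y) ^ 2)) * I0 (a * y / t) := by
    convert I0_le_exp_sq_sub_sq_mul_I0 (by positivity : 0 ≤ a * y / t)
      (by gcongr : a * y / t ≤ b * y / t) using 3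
    field_simp
  calc pk t b y ≤ t⁻¹ * exp (-(a ^ 2 + y ^ 2) / (2 * t)) *
        (exp ((b ^ 2 - a ^ 2) / (4 * (t / y) ^ 2)) * I0 (a * y / t)) := by
        rw [pk]
        gcongr
        exact zero_le_one.trans (one_le_I0 _)
    _ = exp ((b ^ 2 - a ^ 2) / (4 * (t / y) ^ 2)) * pk t a y := by rw [pk]; ring

lemma pk_sub_le_exp_mul_pk {t y u : ℝ} (hy : 0 < y) (hyt : y < t) (hty : 16 * t ≤ y ^ 2)
    (hu : 0 ≤ u) (hut : u < t) :
    pk (t - u) 1 y ≤ exp (-(3 / 16 * (u / (t / y) ^ 2))) * pk t 1 y := by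
  have ht : 0 < t := hy.trans hyt
  have hs : 0 < t - u := sub_pos.2 hut
  have hy16 : 16 < y := by nlinarith
  have hrate : t - (1 - y) ^ 2 / 2 ≤ -(3 / 16 * y ^ 2) := by nlinarith
  have hgap : u / t ^ 2 ≤ 1 / (t - u) - 1 / t := by
    rw [div_sub_div _ _ hs.ne' ht.ne', one_mul, mul_one, sub_sub_cancel, sq]
    gcongr
    linarith
  refine (pk_le_exp_mul_pk hs (sub_le_self t hu) (by linarith : 0 ≤ 1 * y)).trans ?_
  gcongr
  · exact (pk_pos ht _ _).le
  calc (t - (1 - y) ^ 2 / 2) * (1 / (t - u) - 1 / t)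
      ≤ -(3 / 16 * y ^ 2) * (u / t ^ 2) :=
        mul_le_mul_of_nonpos_of_nonneg hrate hgap (by linarith [sq_nonneg y])
          (le_trans (by positivity) hgap)
    _ = -(3 / 16 * (u / (t / y) ^ 2)) := by field_simp

lemma exp_mul_pk_le_pk_sub {t y u : ℝ} (hy : 1 ≤ y) (ht : 0 < t) (hu : 0 ≤ u) (hut : u ≤ t / 2) :
    exp (-(2 * (u / (t / y) ^ 2))) * pk t 1 y ≤ pk (t - u) 1 y := by
  have hs : 0 < t - u := by linarith
  have hgap : 1 / (t - u) - 1 / t ≤ 2 * (u / t ^ 2) := by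
    rw [div_sub_div _ _ hs.ne' ht.ne', one_mul, mul_one, sub_sub_cancel, ← mul_div_assoc,
      div_le_div_iff₀ (by positivity) (by positivity)]
    nlinarith [mul_nonneg hu ht.le]
  have hgap0 : 0 ≤ 1 / (t - u) - 1 / t :=
    sub_nonneg.2 (one_div_le_one_div_of_le hs (by linarith))
  refine le_trans ?_ (exp_mul_pk_le_pk hs (sub_le_self t hu) (by linarith : 0 ≤ 1 * y))
  refine mul_le_mul_of_nonneg_right (exp_le_exp.2 (neg_le_neg ?_)) (pk_pos ht _ _).le
  calc (1 ^ 2 + y ^ 2) / 2 * (1 / (t - u) - 1 / t) ≤ y ^ 2 * (2 * (u / t ^ 2)) := by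
        gcongr
        nlinarith
    _ = 2 * (u / (t / y) ^ 2) := by field_simp

lemma mul_one_sub_min_le_pk_sub {t y u R : ℝ} (hR : R = (t / y) ^ 2) (hy : 1 ≤ y) (hRt : R ≤ t)
    (hu : 0 ≤ u) (hut : u < t) : pk t 1 y * (1 - 2 / R * min u R) ≤ pk (t - u) 1 y := by
  have ht : 0 < t := hu.trans_lt hut
  have hR0 : 0 < R := hR ▸ by positivity
  rcases le_total u (R / 2) with huR | huR
  · refine le_trans ?_ (exp_mul_pk_le_pk_sub hy ht hu (by linarith))
    rw [mul_comm, min_eq_left (by linarith), ← hR]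
    gcongr
    · exact (pk_pos ht _ _).le
    · linarith [add_one_le_exp (-(2 * (u / R))), div_mul_eq_mul_div 2 R u, mul_div_assoc 2 u R]
  · have hmin : 1 ≤ 2 / R * min u R := by
      rw [div_mul_eq_mul_div, le_div_iff₀ hR0]
      linarith [le_min huR (by linarith : R / 2 ≤ R)]
    exact (mul_nonpos_of_nonneg_of_nonpos (pk_pos ht _ _).le (by linarith)).trans
      (pk_pos (sub_pos.2 hut) _ _).le

/-! ### Loss of heat under a random reduction of time -/

/-- The amount by which the free heat kernel from `1` to `y` drops when the time `t` is shortened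
by `u`. The kernel counts as zero once `u` exhausts `t`, so that the integral in Hunt's formula
becomes an average over all hitting times. -/
noncomputable def pkLoss (t y u : ℝ) : ℝ :=
  pk t 1 y - (Set.Iio t).indicator (fun u => pk (t - u) 1 y) u

lemma pkLoss_of_lt {t u : ℝ} (hut : u < t) (y : ℝ) : pkLoss t y u = pk t 1 y - pk (t - u) 1 y := by
  rw [pkLoss, Set.indicator_of_mem (Set.mem_Iio.2 hut)]

lemma pkLoss_of_le {t u : ℝ} (htu : t ≤ u) (y : ℝ) : pkLoss t y u = pk t 1 y := by
  rw [pkLoss, Set.indicator_of_notMem (Set.notMem_Iio.2 htu), sub_zero]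

lemma measurable_pkLoss (t y : ℝ) : Measurable (pkLoss t y) :=
  measurable_const.sub <|
    ((measurable_pk_left 1 y).comp (measurable_const.sub measurable_id)).indicator measurableSet_Iio

lemma pkLoss_le (t y u : ℝ) : pkLoss t y u ≤ pk t 1 y :=
  sub_le_self _ (Set.indicator_nonneg (fun _ hu => (pk_pos (sub_pos.2 hu) _ _).le) _)

lemma mul_pk_le_pkLoss {t y u : ℝ} (hy : 0 < y) (hyt : y < t) (hty : 16 * t ≤ y ^ 2) (hu : 0 ≤ u) :
    (1 - exp (-(3 / 16 * (u / (t / y) ^ 2)))) * pk t 1 y ≤ pkLoss t y u := by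
  rcases lt_or_ge u t with hut | htu
  · rw [pkLoss_of_lt hut]
    linarith [pk_sub_le_exp_mul_pk hy hyt hty hu hut]
  · rw [pkLoss_of_le htu]
    exact mul_le_of_le_one_left (pk_pos (hy.trans hyt) _ _).le (sub_le_self _ (exp_nonneg _))

lemma pkLoss_nonneg {t y u : ℝ} (hy : 0 < y) (hyt : y < t) (hty : 16 * t ≤ y ^ 2) (hu : 0 ≤ u) :
    0 ≤ pkLoss t y u := by
  refine (mul_nonneg (sub_nonneg.2 (exp_le_one_iff.2 ?_)) (pk_pos (hy.trans hyt) _ _).le).trans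
    (mul_pk_le_pkLoss hy hyt hty hu)
  exact neg_nonpos.2 (by positivity)

lemma pkLoss_le_mul_min {t y u R : ℝ} (hR : R = (t / y) ^ 2) (hy : 1 ≤ y) (ht : 0 < t)
    (hRt : R ≤ t) (hu : 0 ≤ u) : pkLoss t y u ≤ pk t 1 y * (2 / R * min u R) := by
  rcases lt_or_ge u t with hut | htu
  · rw [pkLoss_of_lt hut]
    linarith [mul_one_sub_min_le_pk_sub hR hy hRt hu hut]
  · have hR0 : 0 < R := hR ▸ by positivity
    rw [pkLoss_of_le htu, min_eq_right (hRt.trans htu), div_mul_cancel₀ _ hR0.ne']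
    linarith [pk_pos ht 1 y]

section Density

variable {f : ℝ → ℝ}

lemma integrableOn_mul_pkLoss {t y : ℝ} (hf : IntegrableOn f (Set.Ioi 0)) (hy : 0 < y)
    (hyt : y < t) (hty : 16 * t ≤ y ^ 2) :
    IntegrableOn (fun u => f u * pkLoss t y u) (Set.Ioi 0) := by
  refine hf.mul_bdd (c := pk t 1 y) (measurable_pkLoss t y).aestronglyMeasurable ?_
  filter_upwards [ae_restrict_mem measurableSet_Ioi] with u hu
  rw [norm_of_nonneg (pkLoss_nonneg hy hyt hty (Set.mem_Ioi.1 hu).le)]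
  exact pkLoss_le t y u

lemma pk_sub_setIntegral_eq {t y : ℝ} (hf : ∫ u in Set.Ioi 0, f u = 1) (hy : 0 < y)
    (hyt : y < t) (hty : 16 * t ≤ y ^ 2) :
    pk t 1 y - ∫ u in Set.Ioo 0 t, f u * pk (t - u) 1 y =
      ∫ u in Set.Ioi 0, f u * pkLoss t y u := by
  have hint : IntegrableOn f (Set.Ioi 0) := integrable_of_integral_eq_one hf
  have hind : ∫ u in Set.Ioo 0 t, f u * pk (t - u) 1 y =
      ∫ u in Set.Ioi 0, (f u * pk t 1 y - f u * pkLoss t y u) := by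
    rw [← Set.Ioi_inter_Iio, ← setIntegral_indicator measurableSet_Iio]
    congr with u
    rw [pkLoss, Set.indicator_apply, Set.indicator_apply]
    split_ifs <;> ring
  rw [hind, integral_sub (hint.mul_const _) (integrableOn_mul_pkLoss hint hy hyt hty),
    integral_mul_const, hf]
  ring

lemma mul_setIntegral_Ioi_le_setIntegral_pkLoss {t y : ℝ} (hint : IntegrableOn f (Set.Ioi 0))
    (hf0 : ∀ u, 0 < u → 0 ≤ f u) (hy : 0 < y) (hyt : y < t) (hty : 16 * t ≤ y ^ 2) :
    (1 - exp (-(3 / 16))) * pk t 1 y * ∫ u in Set.Ioi ((t / y) ^ 2), f u ≤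
      ∫ u in Set.Ioi 0, f u * pkLoss t y u := by
  have hR : 0 < (t / y) ^ 2 := by have := hy.trans hyt; positivity
  have hsub : Set.Ioi ((t / y) ^ 2) ⊆ Set.Ioi 0 := Set.Ioi_subset_Ioi hR.le
  have hloss := integrableOn_mul_pkLoss hint hy hyt hty
  calc (1 - exp (-(3 / 16))) * pk t 1 y * ∫ u in Set.Ioi ((t / y) ^ 2), f u
      = ∫ u in Set.Ioi ((t / y) ^ 2), f u * ((1 - exp (-(3 / 16))) * pk t 1 y) := by
        rw [integral_mul_const, mul_comm]
    _ ≤ ∫ u in Set.Ioi ((t / y) ^ 2), f u * pkLoss t y u := by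
        refine setIntegral_mono_on ((hint.mono_set hsub).mul_const _) (hloss.mono_set hsub)
          measurableSet_Ioi fun u hu => ?_
        have hRu : 1 ≤ u / (t / y) ^ 2 := (one_le_div hR).2 (Set.mem_Ioi.1 hu).le
        refine mul_le_mul_of_nonneg_left (le_trans ?_
          (mul_pk_le_pkLoss hy hyt hty (hsub hu).le)) (hf0 u (hsub hu))
        have := (pk_pos (hy.trans hyt) 1 y).le
        gcongr
        linarith
    _ ≤ ∫ u in Set.Ioi 0, f u * pkLoss t y u := by
        refine setIntegral_mono_set hloss ?_ hsub.eventuallyLE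
        filter_upwards [ae_restrict_mem measurableSet_Ioi] with u hu
        exact mul_nonneg (hf0 u hu) (pkLoss_nonneg hy hyt hty (Set.mem_Ioi.1 hu).le)

lemma setIntegral_pkLoss_le {t y R : ℝ} (hR : R = (t / y) ^ 2) (hint : IntegrableOn f (Set.Ioi 0))
    (hf0 : ∀ u, 0 < u → 0 ≤ f u) (hy : 1 ≤ y) (hyt : y < t) (hty : 16 * t ≤ y ^ 2) (hRt : R ≤ t) :
    ∫ u in Set.Ioi 0, f u * pkLoss t y u ≤
      2 / R * pk t 1 y * ∫ u in Set.Ioi 0, f u * min u R := by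
  have hy0 : 0 < y := zero_lt_one.trans_le hy
  have hmin : IntegrableOn (fun u => f u * min u R) (Set.Ioi 0) := by
    refine hint.mul_bdd (c := R) (by fun_prop) ?_
    filter_upwards [ae_restrict_mem measurableSet_Ioi] with u hu
    rw [norm_of_nonneg (le_min (Set.mem_Ioi.1 hu).le (hR ▸ sq_nonneg _))]
    exact min_le_right _ _
  rw [← integral_const_mul]
  refine setIntegral_mono_on (integrableOn_mul_pkLoss hint hy0 hyt hty) (hmin.const_mul _)
    measurableSet_Ioi fun u hu => ?_
  calc f u * pkLoss t y u ≤ f u * (pk t 1 y * (2 / R * min u R)) :=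
        mul_le_mul_of_nonneg_left (pkLoss_le_mul_min hR hy (hy0.trans hyt) hRt
          (Set.mem_Ioi.1 hu).le) (hf0 u hu)
    _ = 2 / R * pk t 1 y * (f u * min u R) := by ring

lemma setIntegral_Ioi_mul_min {R : ℝ} (hint : IntegrableOn f (Set.Ioi 0)) (hR : 0 ≤ R) :
    ∫ u in Set.Ioi 0, f u * min u R = ∫ v in Set.Ioc 0 R, ∫ u in Set.Ioi v, f u := by
  have hprod : Integrable (Function.uncurry fun u v => (Set.Iic u).indicator (fun _ => f u) v)
      ((volume.restrict (Set.Ioi 0)).prod (volume.restrict (Set.Ioc 0 R))) := by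
    have := hint.comp_fst (volume.restrict (Set.Ioc 0 R))
    refine (this.indicator (measurableSet_le measurable_snd measurable_fst)).congr ?_
    filter_upwards with p
    simp [Set.indicator_apply, Function.uncurry]
  calc ∫ u in Set.Ioi 0, f u * min u R
      = ∫ u in Set.Ioi 0, ∫ v in Set.Ioc 0 R, (Set.Iic u).indicator (fun _ => f u) v := by
        refine setIntegral_congr_fun measurableSet_Ioi fun u hu => ?_
        rw [setIntegral_indicator measurableSet_Iic, Set.Ioc_inter_Iic, setIntegral_const,
          volume_real_Ioc_of_le (le_min hR (Set.mem_Ioi.1 hu).le), sub_zero, smul_eq_mul, mul_comm,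
          inf_comm]
    _ = ∫ v in Set.Ioc 0 R, ∫ u in Set.Ioi 0, (Set.Iic u).indicator (fun _ => f u) v :=
        integral_integral_swap hprod
    _ = ∫ v in Set.Ioc 0 R, ∫ u in Set.Ioi v, f u := by
        refine setIntegral_congr_fun measurableSet_Ioc fun v hv => ?_
        rw [← integral_Ici_eq_integral_Ioi (x := v),
          ← Set.inter_eq_self_of_subset_right (Set.Ici_subset_Ioi.2 hv.1),
          ← setIntegral_indicator measurableSet_Ici]
        rfl

end Density

/-! ### Logarithmic estimates -/

lemma div_mul_log_one_add_le {a b : ℝ} (ha : 0 < a) (hab : a ≤ b) :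
    a / b * log (1 + b) ≤ log (1 + a) := by
  have hb : 0 < b := ha.trans_le hab
  calc a / b * log (1 + b) = log ((1 + b) ^ (a / b)) := (log_rpow (by positivity) _).symm
    _ ≤ log (1 + a / b * b) :=
        log_le_log (by positivity) <| rpow_one_add_le_one_add_mul_self (by linarith)
          (by positivity) ((div_le_one hb).2 hab)
    _ = log (1 + a) := by rw [div_mul_cancel₀ _ hb.ne']

lemma setIntegral_le_of_le_div_log {S : ℝ → ℝ} {A R : ℝ} (hR : 0 < R) (hA : 0 ≤ A)
    (hS0 : ∀ v, 0 < v → 0 ≤ S v) (hS : ∀ v, 0 < v → S v ≤ A / log (1 + √v)) :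
    ∫ v in Set.Ioc 0 R, S v ≤ 2 * R * (A / log (1 + √R)) := by
  have hlog {v : ℝ} (hv : 0 < v) : 0 < log (1 + √v) :=
    log_pos (lt_add_of_pos_right 1 (sqrt_pos.2 hv))
  have hbound (v : ℝ) (hv : v ∈ Set.Ioc 0 R) :
      S v ≤ √R * (A / log (1 + √R)) * v ^ (-(1 / 2) : ℝ) := by
    have hconc := div_mul_log_one_add_le (sqrt_pos.2 hv.1) (sqrt_le_sqrt hv.2)
    have hsv := sqrt_pos.2 hv.1
    have hlogR := hlog hR
    calc S v ≤ A / (√v / √R * log (1 + √R)) :=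
          (hS v hv.1).trans (div_le_div_of_nonneg_left hA (by positivity) hconc)
      _ = √R * (A / log (1 + √R)) * v ^ (-(1 / 2) : ℝ) := by
          rw [rpow_neg hv.1.le, ← sqrt_eq_rpow]
          field_simp
  have hrpow : IntegrableOn (fun v : ℝ => v ^ (-(1 / 2) : ℝ)) (Set.Ioc 0 R) :=
    (intervalIntegrable_iff_integrableOn_Ioc_of_le hR.le).1
      (intervalIntegral.intervalIntegrable_rpow' (by norm_num))
  have hone : ∫ v in (0 : ℝ)..R, v ^ (-(1 / 2) : ℝ) = 2 * √R := by
    rw [integral_rpow (Or.inl (by norm_num)), sqrt_eq_rpow]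
    norm_num
    ring
  calc ∫ v in Set.Ioc 0 R, S v
      ≤ ∫ v in Set.Ioc 0 R, √R * (A / log (1 + √R)) * v ^ (-(1 / 2) : ℝ) := by
        refine integral_mono_of_nonneg ?_ (hrpow.const_mul _) ?_
        · filter_upwards [ae_restrict_mem measurableSet_Ioc] with v hv using hS0 v hv.1
        · filter_upwards [ae_restrict_mem measurableSet_Ioc] with v hv using hbound v hv
    _ = √R * (A / log (1 + √R)) * (2 * √R) := by
        rw [integral_const_mul, ← intervalIntegral.integral_of_le hR.le, hone]
    _ = 2 * R * (A / log (1 + √R)) := by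
        linear_combination 2 * (A / log (1 + √R)) * mul_self_sqrt hR.le

lemma sq_sub_one_div_sq_le {x r : ℝ} (hx : 1 < x) (hxr : x ≤ r) :
    (x ^ 2 - 1) / r ^ 2 ≤ 3 * (log x / log (1 + r)) := by
  have hx0 : 0 < x := by linarith
  have hr0 : 0 < r := by linarith
  have hlogx : 0 < log x := log_pos hx
  have hlogr : 0 < log (1 + r) := log_pos (by linarith)
  have hgrowth : log (1 + x) ≤ 1 + log x := by
    calc log (1 + x) ≤ log (exp 1 * x) :=
          log_le_log (by linarith) (by nlinarith [add_one_le_exp (1 : ℝ)])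
      _ = 1 + log x := by rw [log_mul (exp_ne_zero 1) hx0.ne', log_exp]
  have hratio : x / r ≤ (1 + log x) / log (1 + r) :=
    (le_div_iff₀ hlogr).2 ((div_mul_log_one_add_le hx0 hxr).trans hgrowth)
  have hinv : 1 - (x ^ 2)⁻¹ ≤ 2 * log x := by
    simpa using one_sub_inv_le_log_of_pos (pow_pos hx0 2)
  have hinv0 : 0 ≤ 1 - (x ^ 2)⁻¹ := sub_nonneg.2 (inv_le_one_of_one_le₀ (by nlinarith))
  calc (x ^ 2 - 1) / r ^ 2 = (1 - (x ^ 2)⁻¹) * (x / r) * (x / r) := by field_simp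
    _ ≤ (1 - (x ^ 2)⁻¹) * (x / r) :=
        mul_le_of_le_one_right (by positivity) ((div_le_one hr0).2 hxr)
    _ ≤ (1 - (x ^ 2)⁻¹) * ((1 + log x) / log (1 + r)) := by gcongr
    _ ≤ 3 * (log x / log (1 + r)) := by
        rw [mul_div_assoc', mul_div_assoc']
        refine div_le_div_of_nonneg_right ?_ hlogr.le
        nlinarith [inv_pos.2 (pow_pos hx0 2)]

lemma log_three_mul_le {r : ℝ} (hr : 0 < r) : log (3 * r) ≤ 2 * log (1 + r) := by
  calc log (3 * r) ≤ log ((1 + r) ^ 2) :=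
        log_le_log (by positivity) (by nlinarith [sq_nonneg (r - 1)])
    _ = 2 * log (1 + r) := by simp

/-! ### The hitting time is almost surely finite -/

section Gaussian

open ProbabilityTheory Filter
open scoped Topology NNReal

lemma gaussianReal_eq_map (m : ℝ) (v : ℝ≥0) :
    gaussianReal m v = (gaussianReal 0 1).map fun z => m + √v * z := by
  have hcomp : (fun z => m + √v * z) = (fun z => m + z) ∘ fun z => √v * z := rfl
  rw [hcomp, ← Measure.map_map (by fun_prop) (by fun_prop), gaussianReal_map_const_mul,
    gaussianReal_map_const_add]
  congr
  · ring
  · ext; simp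

lemma integrable_one_add_abs_gaussianReal (m : ℝ) (v : ℝ≥0) :
    Integrable (fun z => 1 + |z|) (gaussianReal m v) :=
  (integrable_const 1).add ((memLp_id_gaussianReal 1).integrable le_rfl).abs

lemma tendsto_integral_gaussianReal {F : ℝ → ℝ} {m : ℝ} (hF : Measurable F)
    (hbound : ∀ y, ‖F y‖ ≤ 1 + |y|) (hcont : ContinuousAt F m) :
    Tendsto (fun v : ℝ≥0 => ∫ y, F y ∂gaussianReal m v) (𝓝 0) (𝓝 (F m)) := by
  have hscale (z : ℝ) : Tendsto (fun v : ℝ≥0 => m + √v * z) (𝓝 0) (𝓝 m) := by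
    have : Continuous fun v : ℝ≥0 => m + √v * z := by fun_prop
    simpa using this.tendsto 0
  have hle : ∀ᶠ v : ℝ≥0 in 𝓝 0, √v ≤ 1 := by
    filter_upwards [Iic_mem_nhds (zero_lt_one (α := ℝ≥0))] with v hv
    exact sqrt_le_one.2 hv
  have hlim : Tendsto (fun v : ℝ≥0 => ∫ z, F (m + √v * z) ∂gaussianReal 0 1) (𝓝 0)
      (𝓝 (∫ _, F m ∂gaussianReal 0 1)) := by
    refine tendsto_integral_filter_of_dominated_convergence (fun z => |m| + (1 + |z|))
      (.of_forall fun v => (hF.comp (by fun_prop)).aestronglyMeasurable) ?_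
      ((integrable_const _).add (integrable_one_add_abs_gaussianReal 0 1))
      (.of_forall fun z => hcont.tendsto.comp (hscale z))
    filter_upwards [hle] with v hv
    filter_upwards with z
    have habs : |√v * z| ≤ |z| := by
      rw [abs_mul, abs_of_nonneg (sqrt_nonneg _)]
      exact mul_le_of_le_one_left (abs_nonneg z) hv
    linarith [hbound (m + √v * z), abs_add_le m (√v * z)]
  simp only [integral_const, probReal_univ, one_smul] at hlim
  refine hlim.congr fun v => ?_
  rw [gaussianReal_eq_map m v, integral_map (by fun_prop) hF.aestronglyMeasurable]

/-- The factor `√(y / x)` that relates `√(xy) h` to the killed Gaussian kernel, extended by zero to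
`y ≤ 1`. -/
noncomputable def killedWeight (x : ℝ) : ℝ → ℝ := (Set.Ioi 1).indicator fun y => √(y / x)

lemma measurable_killedWeight (x : ℝ) : Measurable (killedWeight x) :=
  Measurable.indicator (by fun_prop) measurableSet_Ioi

lemma norm_killedWeight_le {x : ℝ} (hx : 1 ≤ x) (y : ℝ) : ‖killedWeight x y‖ ≤ 1 + |y| := by
  refine (norm_indicator_le_norm_self _ y).trans ?_
  rw [norm_of_nonneg (sqrt_nonneg _), sqrt_le_left (by positivity)]
  have : y / x ≤ |y| := (div_le_div_of_nonneg_right (le_abs_self y) (by linarith)).trans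
    (div_le_self (abs_nonneg y) hx)
  nlinarith [abs_nonneg y]

lemma continuousAt_killedWeight {x m : ℝ} (hm : m ≠ 1) : ContinuousAt (killedWeight x) m :=
  ContinuousOn.continuousAt_indicator (by fun_prop) (by simpa using hm)

lemma integrable_killedWeight_mul_gaussianPDFReal {x : ℝ} {t : ℝ≥0} (hx : 1 ≤ x) (ht : t ≠ 0)
    (m : ℝ) : Integrable fun y => killedWeight x y * gaussianPDFReal m t y := by
  have hgauss : Integrable (killedWeight x) (gaussianReal m t) :=
    (integrable_one_add_abs_gaussianReal m t).mono'
      (measurable_killedWeight x).aestronglyMeasurable (.of_forall (norm_killedWeight_le hx))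
  rw [gaussianReal_of_var_ne_zero m ht, integrable_withDensity_iff (measurable_gaussianPDF m t)
    (.of_forall fun _ => gaussianPDF_lt_top)] at hgauss
  simpa only [toReal_gaussianPDF] using hgauss

lemma sqrt_mul_hker_mul {t : ℝ≥0} {x y : ℝ} (hx : 0 < x) (hy : 1 < y) :
    √(x * y) * hker t x y * y =
      killedWeight x y * gaussianPDFReal x t y -
        killedWeight x y * gaussianPDFReal (2 - x) t y := by
  have hy0 : 0 < y := by linarith
  have hroot : √(x * y) * (x * y)⁻¹ * y = killedWeight x y := by
    rw [killedWeight, Set.indicator_of_mem (Set.mem_Ioi.2 hy), sqrt_mul hx.le, sqrt_div hy0.le]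
    field_simp
    rw [sq_sqrt hx.le]
  have hnorm : (2 * π * t) ^ (-(1 : ℝ) / 2) = (√(2 * π * t))⁻¹ := by
    rw [neg_div, rpow_neg (by positivity), sqrt_eq_rpow]
  have hswap : (x - y) ^ 2 = (y - x) ^ 2 := by ring
  have hreflect : (x + y - 2) ^ 2 = (y - (2 - x)) ^ 2 := by ring
  rw [hker, hnorm, hswap, hreflect, gaussianPDFReal, gaussianPDFReal]
  linear_combination (√(2 * π * t))⁻¹ * (exp (-(y - x) ^ 2 / (2 * t)) -
    exp (-(y - (2 - x)) ^ 2 / (2 * t))) * hroot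

lemma integrableOn_sqrt_mul_hker_mul {x : ℝ} {t : ℝ≥0} (hx : 1 < x) (ht : t ≠ 0) :
    IntegrableOn (fun y => √(x * y) * hker t x y * y) (Set.Ioi 1) :=
  (integrableOn_congr_fun (fun _ hy => sqrt_mul_hker_mul (by linarith) hy) measurableSet_Ioi).2
    ((integrable_killedWeight_mul_gaussianPDFReal hx.le ht x).sub
      (integrable_killedWeight_mul_gaussianPDFReal hx.le ht (2 - x))).integrableOn

lemma setIntegral_sqrt_mul_hker_mul {x : ℝ} {t : ℝ≥0} (hx : 1 < x) (ht : t ≠ 0) :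
    ∫ y in Set.Ioi 1, √(x * y) * hker t x y * y =
      ∫ y, killedWeight x y ∂gaussianReal x t - ∫ y, killedWeight x y ∂gaussianReal (2 - x) t := by
  rw [setIntegral_congr_fun measurableSet_Ioi
      fun y hy => sqrt_mul_hker_mul (zero_lt_one.trans hx) (Set.mem_Ioi.1 hy),
    setIntegral_eq_integral_of_forall_compl_eq_zero fun y hy => by
      rw [killedWeight, Set.indicator_of_notMem hy]; ring,
    integral_sub (integrable_killedWeight_mul_gaussianPDFReal hx.le ht x)
      (integrable_killedWeight_mul_gaussianPDFReal hx.le ht (2 - x)),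
    integral_gaussianReal_eq_integral_smul ht, integral_gaussianReal_eq_integral_smul ht]
  simp only [smul_eq_mul, mul_comm]

lemma tendsto_setIntegral_sqrt_mul_hker_mul {x : ℝ} (hx : 1 < x) :
    Tendsto (fun t : ℝ => ∫ y in Set.Ioi 1, √(x * y) * hker t x y * y) (𝓝[>] 0) (𝓝 1) := by
  have hlim {m : ℝ} (hm : m ≠ 1) :=
    tendsto_integral_gaussianReal (measurable_killedWeight x) (norm_killedWeight_le hx.le)
      (continuousAt_killedWeight hm)
  have hone : killedWeight x x - killedWeight x (2 - x) = 1 := by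
    rw [killedWeight, Set.indicator_of_mem (Set.mem_Ioi.2 hx),
      Set.indicator_of_notMem (by simp only [Set.mem_Ioi]; linarith), div_self (by linarith),
      sqrt_one, sub_zero]
  have htoNNReal : Tendsto toNNReal (𝓝[>] 0) (𝓝 0) :=
    tendsto_nhdsWithin_of_tendsto_nhds (continuous_real_toNNReal.tendsto' 0 0 toNNReal_zero)
  have hdiff := ((hlim hx.ne').sub (hlim (by linarith : 2 - x ≠ 1))).comp htoNNReal
  rw [hone] at hdiff
  refine hdiff.congr' ?_
  filter_upwards [self_mem_nhdsWithin] with t ht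
  lift t to ℝ≥0 using (Set.mem_Ioi.1 ht).le
  rw [setIntegral_sqrt_mul_hker_mul hx (by simpa using (Set.mem_Ioi.1 ht).ne')]
  simp

lemma setIntegral_Ioi_eq_of_tendsto {f : ℝ → ℝ} {I : ℝ} (hf0 : ∀ u, 0 < u → 0 ≤ f u)
    (hf : ∀ t, 0 < t → IntegrableOn f (Set.Ioi t))
    (hI : Tendsto (fun t => ∫ u in Set.Ioi t, f u) (𝓝[>] 0) (𝓝 I)) :
    ∫ u in Set.Ioi 0, f u = I := by
  have hexp : Tendsto exp atBot (𝓝 0) := tendsto_exp_atBot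
  have hcover : AECover (volume.restrict (Set.Ioi 0)) atBot fun s => Set.Ioi (exp s) :=
    aecover_Ioi_of_Ioi hexp
  have hrestrict (s : ℝ) : (volume.restrict (Set.Ioi 0)).restrict (Set.Ioi (exp s)) =
      volume.restrict (Set.Ioi (exp s)) :=
    Measure.restrict_restrict_of_subset (Set.Ioi_subset_Ioi (exp_pos s).le)
  have htendsto : Tendsto (fun s => ∫ u in Set.Ioi (exp s), f u) atBot (𝓝 I) :=
    hI.comp tendsto_exp_atBot_nhdsGT
  have hint : IntegrableOn f (Set.Ioi 0) := by
    refine hcover.integrable_of_integral_tendsto_of_nonneg_ae I (fun s => ?_) ?_ ?_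
    · rw [IntegrableOn, hrestrict]
      exact hf _ (exp_pos s)
    · filter_upwards [ae_restrict_mem measurableSet_Ioi] with u hu using hf0 u hu
    · simpa only [hrestrict] using htendsto
  refine tendsto_nhds_unique (hcover.integral_tendsto_of_countably_generated hint) ?_
  simpa only [hrestrict] using htendsto

variable {p₁ : ℝ → ℝ → ℝ → ℝ} {q : ℝ → ℝ → ℝ}

lemma BesselHK.setIntegral_Ioi_pos (H : BesselHK p₁ q) {t x : ℝ} (ht : 0 < t) (hx : 1 < x) :
    0 < ∫ u in Set.Ioi t, q x u := by
  obtain ⟨c', C', hc', -, hS⟩ := H.surv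
  have hlog : 0 < log (1 + √t) := log_pos (lt_add_of_pos_right 1 (sqrt_pos.2 ht))
  exact (mul_pos hc' (lt_min one_pos (div_pos (log_pos hx) hlog))).trans_le (hS ht hx).1

lemma BesselHK.tendsto_setIntegral_Ioi (H : BesselHK p₁ q) {x : ℝ} (hx : 1 < x) :
    Tendsto (fun t => ∫ u in Set.Ioi t, q x u) (𝓝[>] 0) (𝓝 1) := by
  have hlower := tendsto_setIntegral_sqrt_mul_hker_mul hx
  have hupper : Tendsto (fun t : ℝ => exp (t / 8) *
      ∫ y in Set.Ioi 1, √(x * y) * hker t x y * y) (𝓝[>] 0) (𝓝 1) := by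
    have hexp : Tendsto (fun t : ℝ => exp (t / 8)) (𝓝[>] 0) (𝓝 1) :=
      tendsto_nhdsWithin_of_tendsto_nhds (Continuous.tendsto' (by fun_prop) 0 1 (by simp))
    simpa only [one_mul] using hexp.mul hlower
  have hint {t : ℝ} (ht : 0 < t) :
      IntegrableOn (fun y => √(x * y) * hker t x y * y) (Set.Ioi 1) ∧
        IntegrableOn (fun y => p₁ t x y * y) (Set.Ioi 1) := by
    refine ⟨?_, by_contra fun h => (H.setIntegral_Ioi_pos ht hx).ne' ?_⟩
    · lift t to ℝ≥0 using ht.le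
      exact integrableOn_sqrt_mul_hker_mul hx (by simpa using ht.ne')
    · rw [← H.mass ht hx, integral_undef h]
  refine tendsto_of_tendsto_of_tendsto_of_le_of_le' hlower hupper ?_ ?_ <;>
    filter_upwards [self_mem_nhdsWithin] with t ht <;> rw [← H.mass ht hx]
  · refine setIntegral_mono_on (hint ht).1 (hint ht).2 measurableSet_Ioi fun y hy => ?_
    exact mul_le_mul_of_nonneg_right (H.ac ht hx hy).1 (zero_le_one.trans (Set.mem_Ioi.1 hy).le)
  · rw [← integral_const_mul]
    refine setIntegral_mono_on (hint ht).2 ((hint ht).1.const_mul _) measurableSet_Ioi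
      fun y hy => ?_
    calc p₁ t x y * y ≤ exp (t / 8) * √(x * y) * hker t x y * y :=
          mul_le_mul_of_nonneg_right (H.ac ht hx hy).2 (zero_le_one.trans (Set.mem_Ioi.1 hy).le)
      _ = exp (t / 8) * (√(x * y) * hker t x y * y) := by ring

lemma BesselHK.setIntegral_Ioi_eq_one (H : BesselHK p₁ q) {x : ℝ} (hx : 1 < x) :
    ∫ u in Set.Ioi 0, q x u = 1 :=
  setIntegral_Ioi_eq_of_tendsto (fun _ hu => H.q_nonneg hx hu)
    (fun _ ht => by_contra fun h => (H.setIntegral_Ioi_pos ht hx).ne' (integral_undef h))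
    (H.tendsto_setIntegral_Ioi hx)

end Gaussian

/-! ### Two-sided bounds through Hunt's formula -/

section Hunt

variable {f : ℝ → ℝ} {t x y : ℝ}

lemma mul_log_ratio_mul_pk_le {c' : ℝ} (hf0 : ∀ u, 0 < u → 0 ≤ f u)
    (hf1 : ∫ u in Set.Ioi 0, f u = 1)
    (hsurv : ∀ v, 0 < v → c' * min 1 (log x / log (1 + √v)) ≤ ∫ u in Set.Ioi v, f u)
    (hx : 1 < x) (hy : 0 < y) (hxyt : x * y < t) (hty : 16 * t ≤ y ^ 2) :
    (1 - exp (-(3 / 16))) * c' * (log x / log (1 + t / y)) * pk t 1 y ≤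
      pk t x y - ∫ u in Set.Ioo 0 t, f u * pk (t - u) 1 y := by
  have hyt : y < t := (lt_mul_of_one_lt_left hy hx).trans hxyt
  have ht : 0 < t := hy.trans hyt
  have hxr : x < t / y := (lt_div_iff₀ hy).2 hxyt
  have hP := (pk_pos ht 1 y).le
  have hQ : log x / log (1 + t / y) ≤ 1 :=
    (div_le_one (log_pos (by linarith))).2 (log_le_log (by linarith) (by linarith))
  have htail := hsurv ((t / y) ^ 2) (by positivity)
  rw [sqrt_sq (by positivity), min_eq_right hQ] at htail
  have hκ : 0 ≤ 1 - exp (-(3 / 16) : ℝ) := sub_nonneg.2 (exp_le_one_iff.2 (by norm_num))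
  calc (1 - exp (-(3 / 16))) * c' * (log x / log (1 + t / y)) * pk t 1 y
      = (1 - exp (-(3 / 16))) * pk t 1 y * (c' * (log x / log (1 + t / y))) := by ring
    _ ≤ (1 - exp (-(3 / 16))) * pk t 1 y * ∫ u in Set.Ioi ((t / y) ^ 2), f u := by gcongr
    _ ≤ ∫ u in Set.Ioi 0, f u * pkLoss t y u :=
        mul_setIntegral_Ioi_le_setIntegral_pkLoss (integrable_of_integral_eq_one hf1) hf0 hy hyt hty
    _ = pk t 1 y - ∫ u in Set.Ioo 0 t, f u * pk (t - u) 1 y :=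
        (pk_sub_setIntegral_eq hf1 hy hyt hty).symm
    _ ≤ pk t x y - ∫ u in Set.Ioo 0 t, f u * pk (t - u) 1 y :=
        sub_le_sub_right (pk_le_pk_of_le ht hy.le zero_le_one hx.le hxyt.le (by linarith)) _

lemma sq_sub_one_div_sq_le_one {r : ℝ} (hx : 1 ≤ x) (hxr : x ≤ r) : (x ^ 2 - 1) / r ^ 2 ≤ 1 :=
  (div_le_one (by nlinarith)).2 (by nlinarith)

lemma pk_le_one_add_mul_pk (hx : 1 ≤ x) (hy : 0 < y) (hxyt : x * y ≤ t) :
    pk t x y ≤ (1 + (x ^ 2 - 1) / (t / y) ^ 2) * pk t 1 y := by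
  have ht : 0 < t := (mul_pos (by linarith) hy).trans_le hxyt
  refine (pk_le_exp_mul_pk_of_le ht hy zero_le_one hx).trans ?_
  rw [one_pow, mul_comm 4, ← div_div]
  set d := (x ^ 2 - 1) / (t / y) ^ 2
  have hd0 : 0 ≤ d := div_nonneg (by nlinarith) (sq_nonneg _)
  have hd1 : d ≤ 1 := sq_sub_one_div_sq_le_one hx ((le_div_iff₀ hy).2 hxyt)
  have hd4 : |d / 4| = d / 4 := abs_of_nonneg (by positivity)
  refine mul_le_mul_of_nonneg_right ?_ (pk_pos ht 1 y).le
  have := le_of_abs_le (abs_exp_sub_one_le (by linarith : |d / 4| ≤ 1))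
  linarith

lemma pk_le_two_mul_pk (hx : 1 ≤ x) (hy : 0 < y) (hxyt : x * y ≤ t) :
    pk t x y ≤ 2 * pk t 1 y := by
  refine (pk_le_one_add_mul_pk hx hy hxyt).trans ?_
  have hd := sq_sub_one_div_sq_le_one hx ((le_div_iff₀ hy).2 hxyt)
  exact mul_le_mul_of_nonneg_right (by linarith)
    (pk_pos ((mul_pos (by linarith) hy).trans_le hxyt) 1 y).le

lemma pk_sub_setIntegral_le {C' : ℝ} (hf0 : ∀ u, 0 < u → 0 ≤ f u)
    (hf1 : ∫ u in Set.Ioi 0, f u = 1) (hC' : 0 ≤ C')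
    (hsurv : ∀ v, 0 < v → ∫ u in Set.Ioi v, f u ≤ C' * min 1 (log x / log (1 + √v)))
    (hx : 1 < x) (hy : 0 < y) (hxyt : x * y < t) (hty : 16 * t ≤ y ^ 2) :
    pk t x y - ∫ u in Set.Ioo 0 t, f u * pk (t - u) 1 y ≤
      (3 + 4 * C') * (log x / log (1 + t / y)) * pk t 1 y := by
  have hyt : y < t := (lt_mul_of_one_lt_left hy hx).trans hxyt
  have ht : 0 < t := hy.trans hyt
  have hy16 : 16 < y := by nlinarith
  have hint : IntegrableOn f (Set.Ioi 0) := integrable_of_integral_eq_one hf1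
  set R := (t / y) ^ 2 with hR
  have hR0 : 0 < R := by positivity
  have hRt : R ≤ t := by
    rw [hR, div_pow, div_le_iff₀ (by positivity)]
    nlinarith
  have hmean : ∫ v in Set.Ioc 0 R, ∫ u in Set.Ioi v, f u ≤
      2 * R * (C' * log x / log (1 + t / y)) := by
    rw [← sqrt_sq (by positivity : 0 ≤ t / y)]
    refine setIntegral_le_of_le_div_log hR0 (mul_nonneg hC' (log_pos hx).le) (fun v hv => ?_)
      fun v hv => (hsurv v hv).trans ?_
    · exact setIntegral_nonneg measurableSet_Ioi fun u hu => hf0 u (hv.trans hu)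
    · rw [mul_div_assoc]
      exact mul_le_mul_of_nonneg_left (min_le_right _ _) hC'
  have hloss : pk t 1 y - ∫ u in Set.Ioo 0 t, f u * pk (t - u) 1 y ≤
      4 * C' * (log x / log (1 + t / y)) * pk t 1 y := by
    have hP := (pk_pos ht 1 y).le
    calc pk t 1 y - ∫ u in Set.Ioo 0 t, f u * pk (t - u) 1 y
        = ∫ u in Set.Ioi 0, f u * pkLoss t y u := pk_sub_setIntegral_eq hf1 hy hyt hty
      _ ≤ 2 / R * pk t 1 y * ∫ u in Set.Ioi 0, f u * min u R :=
          setIntegral_pkLoss_le hR hint hf0 (by linarith) hyt hty hRt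
      _ = 2 / R * pk t 1 y * ∫ v in Set.Ioc 0 R, ∫ u in Set.Ioi v, f u := by
          rw [setIntegral_Ioi_mul_min hint hR0.le]
      _ ≤ 2 / R * pk t 1 y * (2 * R * (C' * log x / log (1 + t / y))) := by gcongr
      _ = 4 * C' * (log x / log (1 + t / y)) * pk t 1 y := by field_simp; ring
  have hdrift : (1 + (x ^ 2 - 1) / (t / y) ^ 2) * pk t 1 y ≤
      (1 + 3 * (log x / log (1 + t / y))) * pk t 1 y := by
    have := sq_sub_one_div_sq_le hx ((le_div_iff₀ hy).2 hxyt.le)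
    exact mul_le_mul_of_nonneg_right (by linarith) (pk_pos ht 1 y).le
  linarith [pk_le_one_add_mul_pk hx.le hy hxyt.le]

end Hunt

lemma log_ratio_le {x r : ℝ} (hx : 1 ≤ x) (hr : 1 ≤ r) :
    log x / log (3 * r) ≤ log x / log (1 + r) ∧
      log x / log (1 + r) ≤ 2 * (log x / log (3 * r)) := by
  have hlog : 0 < log (1 + r) := log_pos (by linarith)
  have hle : log (1 + r) ≤ log (3 * r) := log_le_log (by linarith) (by linarith)
  have hlog3 := hlog.trans_le hle
  refine ⟨div_le_div_of_nonneg_left (log_nonneg hx) hlog hle, ?_⟩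
  rw [mul_div_assoc', div_le_div_iff₀ hlog hlog3]
  nlinarith [log_nonneg hx, log_three_mul_le (zero_lt_one.trans_le hr)]

theorem bessel_heat_kernel_estimate_mixed_general (p₁ : ℝ → ℝ → ℝ → ℝ) (q : ℝ → ℝ → ℝ)
    (q_nonneg : ∀ ⦃x s : ℝ⦄, 1 < x → 0 < s → 0 ≤ q x s)
    (q_mass : ∀ ⦃x : ℝ⦄, 1 < x → ∫ u in Set.Ioi 0, q x u = 1)
    (hunt : ∀ ⦃t x y : ℝ⦄, 0 < t → 1 < x → 1 < y →
      p₁ t x y = pk t x y - ∫ u in Set.Ioo 0 t, q x u * pk (t - u) 1 y)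
    (surv : ∃ c' C' : ℝ, 0 < c' ∧ c' ≤ C' ∧ ∀ ⦃t x : ℝ⦄, 0 < t → 1 < x →
      c' * min 1 (log x / log (1 + √t)) ≤ (∫ u in Set.Ioi t, q x u) ∧
      (∫ u in Set.Ioi t, q x u) ≤ C' * min 1 (log x / log (1 + √t))) :
    ∃ c C : ℝ, 0 < c ∧ c ≤ C ∧
      ∀ t x y : ℝ, 1 < x → 0 < y → x * y < t → 16 * t ≤ y ^ 2 →
        c * (log x / log (3 * t / y)) * pk t x y ≤ p₁ t x y ∧
        p₁ t x y ≤ C * (log x / log (3 * t / y)) * pk t x y := by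
  obtain ⟨c', C', hc', hcC', hsurv⟩ := surv
  set κ : ℝ := 1 - exp (-(3 / 16))
  have hκ0 : 0 < κ := sub_pos.2 (exp_lt_one_iff.2 (by norm_num))
  have hκ1 : κ ≤ 1 := sub_le_self _ (exp_nonneg _)
  refine ⟨κ * c' / 2, 2 * (3 + 4 * C'), by positivity, by nlinarith,
    fun t x y hx hy hxyt hty => ?_⟩
  have hxr : x < t / y := (lt_div_iff₀ hy).2 hxyt
  have hyt : y < t := (lt_mul_of_one_lt_left hy hx).trans hxyt
  have ht : 0 < t := hy.trans hyt
  have hC' : 0 < C' := hc'.trans_le hcC'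
  obtain ⟨hQ, hQ'⟩ := log_ratio_le hx.le (hx.trans hxr).le
  have hQ0 : 0 ≤ log x / log (3 * (t / y)) :=
    div_nonneg (log_nonneg hx.le) (log_nonneg (by linarith))
  have hQ0' := hQ0.trans hQ
  have hP := pk_pos ht 1 y
  have hPx := pk_pos ht x y
  rw [hunt ht hx (by nlinarith), mul_div_assoc 3 t y]
  constructor
  · calc κ * c' / 2 * (log x / log (3 * (t / y))) * pk t x y
        ≤ κ * c' / 2 * (log x / log (1 + t / y)) * (2 * pk t 1 y) := by
          gcongr
          exact pk_le_two_mul_pk hx.le hy hxyt.le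
      _ = κ * c' * (log x / log (1 + t / y)) * pk t 1 y := by ring
      _ ≤ _ := mul_log_ratio_mul_pk_le (fun _ hu => q_nonneg hx hu) (q_mass hx)
          (fun _ hv => (hsurv hv hx).1) hx hy hxyt hty
  · calc _ ≤ (3 + 4 * C') * (log x / log (1 + t / y)) * pk t 1 y :=
          pk_sub_setIntegral_le (fun _ hu => q_nonneg hx hu) (q_mass hx) hC'.le
            (fun _ hv => (hsurv hv hx).2) hx hy hxyt hty
      _ ≤ (3 + 4 * C') * (2 * (log x / log (3 * (t / y)))) * pk t x y := by
          gcongr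
          exact pk_le_pk_of_le ht hy.le zero_le_one hx.le hxyt.le (by linarith)
      _ = 2 * (3 + 4 * C') * (log x / log (3 * (t / y))) * pk t x y := by ring

theorem bessel_heat_kernel_estimate_mixed (p₁ : ℝ → ℝ → ℝ → ℝ) (q : ℝ → ℝ → ℝ)
    (H : BesselHK p₁ q) :
    ∃ c C : ℝ, 0 < c ∧ c ≤ C ∧
      ∀ t x y : ℝ, 0 < t → 1 < x → x ≤ y → x*y < t → 16*t ≤ y^2 →
        c * (Real.log x / Real.log (3*t/y)) * pk t x y ≤ p₁ t x y ∧
        p₁ t x y ≤ C * (Real.log x / Real.log (3*t/y)) * pk t x y := by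
  obtain ⟨c, C, hc, hcC, hbound⟩ := bessel_heat_kernel_estimate_mixed_general p₁ q H.q_nonneg
    (fun _ hx => H.setIntegral_Ioi_eq_one hx) H.hunt H.surv
  exact ⟨c, C, hc, hcC, fun t x y _ hx hxy => hbound t x y hx (by linarith)⟩
end

section
/- There exists a constant C₁ > 0 such that for all x, y > 1 and t > 0 with xy ≥ t, one has p₁(t,x,y) ≥ C₁ · min(1, (x−1)(y−1)/t) · (xyt)^{−1/2} · exp(−(x−y)²/(2t)). -/
open Real MeasureTheory

/-! The kernel `√(xy) h` is a Gaussian minus its mirror image in the boundary point `1`. Since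
`(x + y - 2)² = (x - y)² + 4(x - 1)(y - 1)`, it equals
`(2πxyt)^(-1/2) exp(-(x - y)² / (2t)) (1 - exp(-2a))` with `a = (x - 1)(y - 1) / t`, and
concavity of `1 - exp(-2a)` in `a` bounds the last factor below by `(1 - exp(-2)) min(1, a)`. The
lower half of (AC) transfers the bound to `p₁`. -/

theorem one_sub_exp_neg_mul_min_le {c a : ℝ} (hc : 0 ≤ c) (ha : 0 ≤ a) :
    (1 - exp (-c)) * min 1 a ≤ 1 - exp (-(c * a)) := by
  rcases le_total 1 a with h1a | ha1
  · have hexp : exp (-(c * a)) ≤ exp (-c) :=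
      exp_le_exp.2 (neg_le_neg (le_mul_of_one_le_right hc h1a))
    rw [min_eq_left h1a]
    linarith
  · have hconv : exp ((1 - a) * 0 + a * -c) ≤ (1 - a) * exp 0 + a * exp (-c) :=
      convexOn_exp.2 trivial trivial (sub_nonneg.2 ha1) ha (sub_add_cancel 1 a)
    have harg : (1 - a) * 0 + a * -c = -(c * a) := by ring
    rw [harg, exp_zero] at hconv
    rw [min_eq_right ha1]
    linarith

theorem exp_neg_reflected_sq_div (t x y : ℝ) :
    exp (-(x + y - 2) ^ 2 / (2 * t)) =
      exp (-(x - y) ^ 2 / (2 * t)) * exp (-(2 * ((x - 1) * (y - 1) / t))) := by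
  rw [← exp_add]
  congr 1
  ring

theorem sqrt_mul_hker {t : ℝ} (ht : 0 ≤ t) (x y : ℝ) :
    √(x * y) * hker t x y =
      (√(2 * π))⁻¹ * ((√(x * y * t))⁻¹ * exp (-(x - y) ^ 2 / (2 * t))) *
        (1 - exp (-(2 * ((x - 1) * (y - 1) / t)))) := by
  have hnorm : (2 * π * t) ^ (-(1 : ℝ) / 2) = (√(2 * π))⁻¹ * (√t)⁻¹ := by
    rw [neg_div, rpow_neg (by positivity), ← sqrt_eq_rpow, sqrt_mul' _ ht, mul_inv]
  have hweight : √(x * y) * (x * y)⁻¹ = (√(x * y))⁻¹ := sqrt_div_self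
  rw [hker, hnorm, exp_neg_reflected_sq_div, sqrt_mul' _ ht, mul_inv √(x * y), ← hweight]
  ring

theorem le_sqrt_mul_hker {t x y : ℝ} (ht : 0 ≤ t) (hxy : 0 ≤ (x - 1) * (y - 1)) :
    (√(2 * π))⁻¹ * (1 - exp (-2)) *
        (min 1 ((x - 1) * (y - 1) / t) * (√(x * y * t))⁻¹ * exp (-(x - y) ^ 2 / (2 * t))) ≤
      √(x * y) * hker t x y := by
  calc _ = (√(2 * π))⁻¹ * ((√(x * y * t))⁻¹ * exp (-(x - y) ^ 2 / (2 * t))) *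
        ((1 - exp (-2)) * min 1 ((x - 1) * (y - 1) / t)) := by ring
    _ ≤ (√(2 * π))⁻¹ * ((√(x * y * t))⁻¹ * exp (-(x - y) ^ 2 / (2 * t))) *
        (1 - exp (-(2 * ((x - 1) * (y - 1) / t)))) := by
      gcongr
      exact one_sub_exp_neg_mul_min_le zero_le_two (div_nonneg hxy ht)
    _ = √(x * y) * hker t x y := (sqrt_mul_hker ht x y).symm

theorem bessel_heat_kernel_lower_bound_large_general (p₁ : ℝ → ℝ → ℝ → ℝ)
    (hp₁ : ∀ ⦃t x y : ℝ⦄, 0 < t → 1 < x → 1 < y → √(x * y) * hker t x y ≤ p₁ t x y) :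
    ∃ C₁ : ℝ, 0 < C₁ ∧ ∀ t x y : ℝ, 0 < t → 1 < x → 1 < y →
      C₁ * (min 1 ((x - 1) * (y - 1) / t) * (√(x * y * t))⁻¹ *
        exp (-(x - y) ^ 2 / (2 * t))) ≤ p₁ t x y := by
  have hexp : exp (-2) < 1 := exp_lt_one_iff.2 (by norm_num)
  refine ⟨(√(2 * π))⁻¹ * (1 - exp (-2)), mul_pos (by positivity) (sub_pos.2 hexp), ?_⟩
  intro t x y ht hx hy
  have hxy : 0 ≤ (x - 1) * (y - 1) := mul_nonneg (sub_nonneg.2 hx.le) (sub_nonneg.2 hy.le)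
  exact (le_sqrt_mul_hker ht.le hxy).trans (hp₁ ht hx hy)

theorem bessel_heat_kernel_lower_bound_large (p₁ : ℝ → ℝ → ℝ → ℝ) (q : ℝ → ℝ → ℝ)
    (H : BesselHK p₁ q) :
    ∃ C₁ : ℝ, 0 < C₁ ∧ ∀ t x y : ℝ, 0 < t → 1 < x → 1 < y → t ≤ x*y →
      C₁ * (min 1 ((x-1)*(y-1)/t) * (Real.sqrt (x*y*t))⁻¹ *
        Real.exp (-(x-y)^2/(2*t))) ≤ p₁ t x y := by
  obtain ⟨C₁, hC₁, hbound⟩ :=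
    bessel_heat_kernel_lower_bound_large_general p₁ fun _ _ _ ht hx hy => (H.ac ht hx hy).1
  exact ⟨C₁, hC₁, fun t x y ht hx hy _ => hbound t x y ht hx hy⟩
end

section
/- There exists a constant C₂ > 0 such that for all x, y > 1 and t > 0 with xy ≥ t, one has p₁(t,x,y) ≤ C₂ · min(1, (x−1)(y−1)/t) · (xyt)^{−1/2} · exp(−(x−y)²/(2t)). -/
open Real MeasureTheory

/-!
Killing only decreases the kernel, so `p₁ ≤ p`, and `I₀(z) ≤ eᶻ / (2√z)` bounds `p` by the Gaussian
envelope `E_t(x,y) = (xyt)^{-1/2} exp(-(x-y)²/(2t))`. It remains to gain the boundary factor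
`(x-1)(y-1)/t`. For bounded `t` it comes from (AC), where `√(xy) h` is a constant times
`E_t(x,y) (1 - exp(-2(x-1)(y-1)/t))`. For large `t ≤ xy` the factor is bounded below unless one of
the points, say `x`, is near `1`; then (CK) splits off one unit of time. The first factor is at most
`2(x-1)(w-1) E₁(x,w)`, the second at most `E_{t-1}(w,y)`, and `E₁(x,w) E_{t-1}(w,y) w` is `E_t(x,y)`
times the density at `w` of the Brownian bridge from `x` to `y` after time `1`, up to the factor
`√(2π)`. Integrating `w - 1` against that density gives `O((y-1)/t)`.
-/

section IntegralBounds

open ProbabilityTheory Set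
open scoped NNReal

lemma integral_posPart_sub_le {Ω : Type*} {_ : MeasurableSpace Ω} {μ : Measure Ω}
    [IsProbabilityMeasure μ] {X : Ω → ℝ} {c : ℝ} (hX : MemLp X 2 μ) (hc : c ≤ μ[X]) :
    ∫ ω, max (X ω - c) 0 ∂μ ≤ μ[X] - c + √(Var[X; μ]) := by
  have hdev : MemLp (fun ω ↦ |X ω - μ[X]|) 2 μ := (hX.sub (memLp_const _)).abs
  have hdev_int := hdev.integrable one_le_two
  have hsq : (∫ ω, |X ω - μ[X]| ∂μ) ^ 2 ≤ Var[X; μ] := by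
    have h := variance_nonneg (fun ω ↦ |X ω - μ[X]|) μ
    rw [variance_eq_sub hdev] at h
    rw [variance_eq_integral hX.aemeasurable]
    simpa only [Pi.pow_apply, sq_abs, sub_nonneg] using h
  calc ∫ ω, max (X ω - c) 0 ∂μ
      ≤ ∫ ω, (μ[X] - c + |X ω - μ[X]|) ∂μ := by
        refine integral_mono_of_nonneg (.of_forall fun ω ↦ le_max_right _ _)
          ((integrable_const _).add hdev_int) (.of_forall fun ω ↦ max_le ?_ ?_)
        · linarith [le_abs_self (X ω - μ[X])]
        · linarith [abs_nonneg (X ω - μ[X])]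
    _ = μ[X] - c + ∫ ω, |X ω - μ[X]| ∂μ := by
        simp [integral_add (integrable_const _) hdev_int]
    _ ≤ μ[X] - c + √(Var[X; μ]) := by gcongr; exact le_sqrt_of_sq_le hsq

lemma integrable_gaussianReal_iff {m : ℝ} {v : ℝ≥0} (hv : v ≠ 0) {f : ℝ → ℝ} :
    Integrable f (gaussianReal m v) ↔ Integrable fun w ↦ gaussianPDFReal m v w * f w := by
  rw [gaussianReal_of_var_ne_zero m hv,
    integrable_withDensity_iff_integrable_smul' (measurable_gaussianPDF m v)
      (.of_forall fun _ ↦ gaussianPDF_lt_top)]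
  simp only [toReal_gaussianPDF, smul_eq_mul]

lemma setIntegral_Ioi_le_of_le_gaussianPDFReal {f : ℝ → ℝ} {B c m : ℝ} {v : ℝ≥0} (hv : v ≠ 0)
    (hB : 0 ≤ B) (hc : c ≤ m) (hf₀ : ∀ w, c < w → 0 ≤ f w)
    (hf : ∀ w, c < w → f w ≤ B * (gaussianPDFReal m v w * (w - c))) :
    ∫ w in Ioi c, f w ≤ B * (m - c + √v) := by
  set F : ℝ → ℝ := fun w ↦ B * (gaussianPDFReal m v w * max (w - c) 0)
  have hF_nonneg (w : ℝ) : 0 ≤ F w :=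
    mul_nonneg hB (mul_nonneg (gaussianPDFReal_nonneg m v w) (le_max_right _ _))
  have hid : MemLp id 2 (gaussianReal m v) := memLp_id_gaussianReal 2
  have hF : Integrable F := .const_mul
    ((integrable_gaussianReal_iff hv).1
      ((hid.integrable one_le_two).sub (integrable_const c)).pos_part) B
  calc ∫ w in Ioi c, f w
      ≤ ∫ w in Ioi c, F w := by
        refine integral_mono_of_nonneg ?_ hF.integrableOn ?_
        · filter_upwards [ae_restrict_mem measurableSet_Ioi] with w hw using hf₀ w hw
        · filter_upwards [ae_restrict_mem measurableSet_Ioi] with w hw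
          simpa only [F, max_eq_left (sub_nonneg.2 (mem_Ioi.1 hw).le)] using hf w hw
    _ ≤ ∫ w, F w := setIntegral_le_integral hF (.of_forall hF_nonneg)
    _ = B * ∫ w, max (id w - c) 0 ∂gaussianReal m v := by
        simp only [F, integral_const_mul, integral_gaussianReal_eq_integral_smul hv, smul_eq_mul,
          id]
    _ ≤ B * (m - c + √v) := by
        have hmean : ∫ w, id w ∂gaussianReal m v = m := integral_id_gaussianReal
        have h := integral_posPart_sub_le hid (hc.trans_eq hmean.symm)
        rw [hmean, variance_id_gaussianReal] at h
        gcongr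

end IntegralBounds

/-- The planar Gaussian profile `(xyt)^{-1/2} exp(-(x-y)²/(2t))`: up to a constant, the common
upper bound for `pk t x y` and for `√(xy) * hker t x y`. -/
noncomputable def gaussianEnvelope (t x y : ℝ) : ℝ :=
  (√(x * y * t))⁻¹ * exp (-(x - y) ^ 2 / (2 * t))

lemma gaussianEnvelope_nonneg (t x y : ℝ) : 0 ≤ gaussianEnvelope t x y := by
  unfold gaussianEnvelope; positivity

lemma gaussianEnvelope_comm (t x y : ℝ) : gaussianEnvelope t x y = gaussianEnvelope t y x := by
  rw [gaussianEnvelope, gaussianEnvelope, mul_comm x y, ← neg_sub y x, neg_sq]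

lemma centralBinom_sq_mul_le (n : ℕ) : n.centralBinom ^ 2 * (2 * n + 1) ≤ 16 ^ n := by
  induction n with
  | zero => simp
  | succ n ih =>
    refine le_of_mul_le_mul_left ?_ (by positivity : 0 < (n + 1) ^ 2)
    calc (n + 1) ^ 2 * ((n + 1).centralBinom ^ 2 * (2 * (n + 1) + 1))
        = ((n + 1) * (n + 1).centralBinom) ^ 2 * (2 * n + 3) := by ring
      _ = (n.centralBinom ^ 2 * (2 * n + 1)) * (4 * (2 * n + 1) * (2 * n + 3)) := by
          rw [Nat.succ_mul_centralBinom_succ]; ring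
      _ ≤ 16 ^ n * (16 * (n + 1) ^ 2) := Nat.mul_le_mul ih (by nlinarith)
      _ = (n + 1) ^ 2 * 16 ^ (n + 1) := by ring

lemma I0_term_eq (z : ℝ) (n : ℕ) :
    (z / 2) ^ (2 * n) / (n.factorial : ℝ) ^ 2 =
      n.centralBinom / 4 ^ n * (z ^ (2 * n) / (2 * n).factorial) := by
  have hfact : ((2 * n).factorial : ℝ) = n.centralBinom * (n.factorial : ℝ) ^ 2 := by
    have h := Nat.choose_mul_factorial_mul_factorial (show n ≤ 2 * n by lia)
    rw [show 2 * n - n = n by lia, ← Nat.centralBinom_eq_two_mul_choose] at h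
    exact_mod_cast (h.symm.trans (by ring))
  have hbinom : (n.centralBinom : ℝ) ≠ 0 := mod_cast n.centralBinom_ne_zero
  rw [hfact, div_pow, pow_mul 2 2 n]
  norm_num
  field_simp

-- The coefficients of `I₀` are those of `cosh` times `b = O(n^{-1/2})`. AM-GM trades `b` for
-- `b² ≤ 1 / (2n + 1)`, the ratio of the coefficients of `sinh` to those of `cosh`.
lemma two_mul_sqrt_mul_I0_term_le {z : ℝ} (hz : 0 ≤ z) (n : ℕ) :
    2 * √z * ((z / 2) ^ (2 * n) / (n.factorial : ℝ) ^ 2) ≤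
      z ^ (2 * n) / (2 * n).factorial + z ^ (2 * n + 1) / (2 * n + 1).factorial := by
  set b : ℝ := n.centralBinom / 4 ^ n
  have hb : b ^ 2 ≤ 1 / (2 * n + 1) := by
    rw [div_pow, div_le_div_iff₀ (by positivity) (by positivity), one_mul, ← pow_mul, mul_comm n,
      pow_mul]
    norm_num
    exact_mod_cast centralBinom_sq_mul_le n
  have hamgm : 2 * √z * b ≤ 1 + z * b ^ 2 := by
    nlinarith [sq_nonneg (√z * b - 1), sq_sqrt hz]
  calc 2 * √z * ((z / 2) ^ (2 * n) / (n.factorial : ℝ) ^ 2)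
      = 2 * √z * b * (z ^ (2 * n) / (2 * n).factorial) := by rw [I0_term_eq]; ring
    _ ≤ (1 + z * (1 / (2 * n + 1))) * (z ^ (2 * n) / (2 * n).factorial) := by
        gcongr; exact hamgm.trans (by gcongr)
    _ = z ^ (2 * n) / (2 * n).factorial + z ^ (2 * n + 1) / (2 * n + 1).factorial := by
        rw [Nat.factorial_succ]; push_cast; field_simp; ring

lemma I0_term_nonneg (z : ℝ) (n : ℕ) : 0 ≤ (z / 2) ^ (2 * n) / (n.factorial : ℝ) ^ 2 := by
  rw [pow_mul]; positivity

lemma I0_nonneg (z : ℝ) : 0 ≤ I0 z := tsum_nonneg (I0_term_nonneg z)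

lemma I0_le_exp_div {z : ℝ} (hz : 0 < z) : I0 z ≤ exp z / (2 * √z) := by
  have hexp := (hasSum_cosh z).add (hasSum_sinh z)
  rw [cosh_add_sinh] at hexp
  have hterm (n : ℕ) := two_mul_sqrt_mul_I0_term_le hz.le n
  have hsummable : Summable fun n : ℕ ↦ 2 * √z * ((z / 2) ^ (2 * n) / (n.factorial : ℝ) ^ 2) :=
    .of_nonneg_of_le (fun n ↦ mul_nonneg (by positivity) (I0_term_nonneg z n)) hterm hexp.summable
  rw [le_div_iff₀' (by positivity), I0, ← tsum_mul_left]
  exact hasSum_le hterm hsummable.hasSum hexp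

lemma pk_nonneg {t : ℝ} (ht : 0 ≤ t) (x y : ℝ) : 0 ≤ pk t x y := by
  have := I0_nonneg (x * y / t)
  unfold pk; positivity

lemma pk_le_gaussianEnvelope {t x y : ℝ} (ht : 0 < t) (hx : 0 < x) (hy : 0 < y) :
    pk t x y ≤ gaussianEnvelope t x y := by
  have hexp : exp (-(x ^ 2 + y ^ 2) / (2 * t)) * exp (x * y / t) =
      exp (-(x - y) ^ 2 / (2 * t)) := by
    rw [← exp_add]; congr 1; field_simp; ring
  have hsqrt : √(x * y * t) = t * √(x * y / t) := by
    rw [show x * y * t = t ^ 2 * (x * y / t) by field_simp, sqrt_mul (by positivity),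
      sqrt_sq ht.le]
  calc pk t x y
      ≤ t⁻¹ * exp (-(x ^ 2 + y ^ 2) / (2 * t)) * (exp (x * y / t) / (2 * √(x * y / t))) := by
        unfold pk; gcongr; exact I0_le_exp_div (by positivity)
    _ = gaussianEnvelope t x y / 2 := by
        rw [gaussianEnvelope, ← hexp, hsqrt]; field_simp
    _ ≤ gaussianEnvelope t x y := half_le_self (gaussianEnvelope_nonneg t x y)

lemma sqrt_mul_hker_eq {t x y : ℝ} (ht : 0 < t) (hx : 0 < x) (hy : 0 < y) :
    √(x * y) * hker t x y =
      (√(2 * π))⁻¹ * gaussianEnvelope t x y * (1 - exp (-(2 * ((x - 1) * (y - 1) / t)))) := by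
  have hreflect : exp (-(x + y - 2) ^ 2 / (2 * t)) =
      exp (-(x - y) ^ 2 / (2 * t)) * exp (-(2 * ((x - 1) * (y - 1) / t))) := by
    rw [← exp_add]; congr 1; field_simp; ring
  have hpow : (2 * π * t) ^ (-(1 : ℝ) / 2) = (√(2 * π))⁻¹ * (√t)⁻¹ := by
    rw [neg_div, rpow_neg (by positivity), ← sqrt_eq_rpow, sqrt_mul (by positivity), mul_inv]
  have hinv : √(x * y) * (x * y)⁻¹ = (√(x * y))⁻¹ := by
    rw [← div_eq_mul_inv, sqrt_div_self]
  calc √(x * y) * hker t x y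
      = (√(x * y) * (x * y)⁻¹) * (2 * π * t) ^ (-(1 : ℝ) / 2) * exp (-(x - y) ^ 2 / (2 * t)) *
          (1 - exp (-(2 * ((x - 1) * (y - 1) / t)))) := by
        rw [hker, hreflect]; ring
    _ = _ := by
        rw [hinv, hpow, gaussianEnvelope, sqrt_mul (by positivity) t, mul_inv]; ring

lemma sqrt_mul_hker_le {t x y : ℝ} (ht : 0 < t) (hx : 1 ≤ x) (hy : 1 ≤ y) :
    √(x * y) * hker t x y ≤ (x - 1) * (y - 1) / t * gaussianEnvelope t x y := by
  set A := (x - 1) * (y - 1) / t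
  have hA : 0 ≤ A := div_nonneg (mul_nonneg (sub_nonneg.2 hx) (sub_nonneg.2 hy)) ht.le
  have hpi : 2 ≤ √(2 * π) := le_sqrt_of_sq_le (by linarith [pi_gt_three])
  have henv := gaussianEnvelope_nonneg t x y
  calc √(x * y) * hker t x y
      = (√(2 * π))⁻¹ * gaussianEnvelope t x y * (1 - exp (-(2 * A))) :=
        sqrt_mul_hker_eq ht (by linarith) (by linarith)
    _ ≤ 2⁻¹ * gaussianEnvelope t x y * (2 * A) := by
        gcongr
        · exact sub_nonneg.2 (exp_le_one_iff.2 (by linarith))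
        · linarith [one_sub_le_exp_neg (2 * A)]
    _ = A * gaussianEnvelope t x y := by ring

lemma exp_mul_sqrt_mul_hker_le {t x y : ℝ} (ht : 0 < t) (ht4 : t ≤ 4) (hx : 1 ≤ x) (hy : 1 ≤ y) :
    exp (t / 8) * √(x * y) * hker t x y ≤
      2 * ((x - 1) * (y - 1) / t) * gaussianEnvelope t x y := by
  have hexp : exp (t / 8) ≤ 2 :=
    calc exp (t / 8) ≤ exp (1 / 2) := exp_le_exp.2 (by linarith)
      _ ≤ 1 / (1 - 1 / 2) := exp_bound_div_one_sub_of_interval (by norm_num) (by norm_num)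
      _ = 2 := by norm_num
  have hprofile : 0 ≤ (x - 1) * (y - 1) / t * gaussianEnvelope t x y :=
    mul_nonneg (div_nonneg (mul_nonneg (sub_nonneg.2 hx) (sub_nonneg.2 hy)) ht.le)
      (gaussianEnvelope_nonneg t x y)
  rw [mul_assoc, mul_assoc]
  exact mul_le_mul_of_nonneg hexp (sqrt_mul_hker_le ht hx hy) (exp_pos _).le hprofile

section ChapmanKolmogorov

open ProbabilityTheory Set

lemma gaussianEnvelope_mul_gaussianEnvelope_mul {s r x y w : ℝ} (hs : 0 < s) (hr : 0 < r)
    (hx : 0 < x) (hy : 0 < y) (hw : 0 < w) :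
    gaussianEnvelope s x w * gaussianEnvelope r w y * w =
      √(2 * π) * gaussianEnvelope (s + r) x y *
        gaussianPDFReal ((r * x + s * y) / (s + r)) (s * r / (s + r)).toNNReal w := by
  have hexp : exp (-(x - w) ^ 2 / (2 * s)) * exp (-(w - y) ^ 2 / (2 * r)) =
      exp (-(x - y) ^ 2 / (2 * (s + r))) *
        exp (-(w - (r * x + s * y) / (s + r)) ^ 2 / (2 * (s * r / (s + r)))) := by
    rw [← exp_add, ← exp_add]; congr 1; field_simp; ring
  have hsqrt : (√(x * w * s))⁻¹ * (√(w * y * r))⁻¹ * w =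
      √(2 * π) * (√(x * y * (s + r)))⁻¹ * (√(2 * π * (s * r / (s + r))))⁻¹ := by
    have hleft : √(x * w * s) * √(w * y * r) = w * √(x * y * (s * r)) := by
      rw [← sqrt_mul (by positivity), ← sqrt_sq hw.le, ← sqrt_mul (by positivity), sqrt_sq hw.le]
      ring_nf
    have hright : √(x * y * (s + r)) * √(2 * π * (s * r / (s + r))) =
        √(2 * π) * √(x * y * (s * r)) := by
      rw [← sqrt_mul (by positivity), ← sqrt_mul (by positivity)]
      congr 1; field_simp
    rw [← mul_inv, hleft, mul_assoc √(2 * π), ← mul_inv, hright]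
    field_simp
  rw [gaussianPDFReal, coe_toNNReal _ (by positivity), gaussianEnvelope, gaussianEnvelope,
    gaussianEnvelope]
  calc _ = ((√(x * w * s))⁻¹ * (√(w * y * r))⁻¹ * w) *
        (exp (-(x - w) ^ 2 / (2 * s)) * exp (-(w - y) ^ 2 / (2 * r))) := by ring
    _ = _ := by rw [hsqrt, hexp]; ring

lemma setIntegral_Ioi_mul_le_gaussianEnvelope {f g : ℝ → ℝ} {A c s r x y : ℝ} (hA : 0 ≤ A)
    (hc : 0 ≤ c) (hs : 0 < s) (hr : 0 < r) (hx : c < x) (hy : c < y)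
    (hf₀ : ∀ w, c < w → 0 ≤ f w) (hg₀ : ∀ w, c < w → 0 ≤ g w)
    (hf : ∀ w, c < w → f w ≤ A * (w - c) * gaussianEnvelope s x w)
    (hg : ∀ w, c < w → g w ≤ gaussianEnvelope r w y) :
    ∫ w in Ioi c, f w * g w * w ≤ A * √(2 * π) * gaussianEnvelope (s + r) x y *
      ((r * x + s * y) / (s + r) - c + √(s * r / (s + r))) := by
  have hv : 0 < s * r / (s + r) := by positivity
  have hmean : c ≤ (r * x + s * y) / (s + r) := by
    rw [le_div_iff₀ (by positivity)]
    nlinarith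
  have henv := gaussianEnvelope_nonneg (s + r) x y
  rw [← coe_toNNReal (s * r / (s + r)) hv.le]
  refine setIntegral_Ioi_le_of_le_gaussianPDFReal (toNNReal_pos.2 hv).ne' (by positivity) hmean
    (fun w hw ↦ mul_nonneg (mul_nonneg (hf₀ w hw) (hg₀ w hw)) (hc.trans hw.le)) fun w hw ↦ ?_
  have hw₀ : 0 < w := hc.trans_lt hw
  calc f w * g w * w
      ≤ (A * (w - c) * gaussianEnvelope s x w) * gaussianEnvelope r w y * w := by
        have := (hf₀ w hw).trans (hf w hw)
        have := hg₀ w hw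
        gcongr
        exacts [hf w hw, hg w hw]
    _ = A * (w - c) * (gaussianEnvelope s x w * gaussianEnvelope r w y * w) := by ring
    _ = _ := by
        rw [gaussianEnvelope_mul_gaussianEnvelope_mul hs hr (hc.trans_lt hx) (hc.trans_lt hy) hw₀]
        ring

end ChapmanKolmogorov

/-- A symmetric semigroup kernel on `(1,∞)`, with respect to `y dy`, that is dominated by the Bessel
heat kernel `pk` and satisfies the upper bound of (AC): the model is `pk` killed on reaching `1`,
where the killed mass is nonnegative and so Hunt's formula gives `le_pk`. -/
structure IsKilledBesselKernel (p₁ : ℝ → ℝ → ℝ → ℝ) : Prop where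
  nonneg : ∀ ⦃t x y : ℝ⦄, 0 < t → 1 < x → 1 < y → 0 ≤ p₁ t x y
  le_pk : ∀ ⦃t x y : ℝ⦄, 0 < t → 1 < x → 1 < y → p₁ t x y ≤ pk t x y
  symm : ∀ ⦃t x y : ℝ⦄, 0 < t → 1 < x → 1 < y → p₁ t x y = p₁ t y x
  ck : ∀ ⦃t s x y : ℝ⦄, 0 < t → 0 < s → 1 < x → 1 < y →
    p₁ (t + s) x y = ∫ w in Set.Ioi (1 : ℝ), p₁ t x w * p₁ s w y * w
  le_hker : ∀ ⦃t x y : ℝ⦄, 0 < t → 1 < x → 1 < y →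
    p₁ t x y ≤ exp (t / 8) * √(x * y) * hker t x y

lemma BesselHK.p₁_le_pk {p₁ : ℝ → ℝ → ℝ → ℝ} {q : ℝ → ℝ → ℝ} (H : BesselHK p₁ q) {t x y : ℝ}
    (ht : 0 < t) (hx : 1 < x) (hy : 1 < y) : p₁ t x y ≤ pk t x y := by
  rw [H.hunt ht hx hy, sub_le_self_iff]
  exact setIntegral_nonneg measurableSet_Ioo fun u hu ↦
    mul_nonneg (H.q_nonneg hx hu.1) (pk_nonneg (sub_pos.2 hu.2).le 1 y)

lemma BesselHK.isKilledBesselKernel {p₁ : ℝ → ℝ → ℝ → ℝ} {q : ℝ → ℝ → ℝ} (H : BesselHK p₁ q) :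
    IsKilledBesselKernel p₁ where
  nonneg := H.p₁_nonneg
  le_pk _ _ _ := H.p₁_le_pk
  symm := H.symm
  ck := H.ck
  le_hker _ _ _ ht hx hy := (H.ac ht hx hy).2

namespace IsKilledBesselKernel

variable {p₁ : ℝ → ℝ → ℝ → ℝ} {t x y : ℝ}

lemma le_gaussianEnvelope (H : IsKilledBesselKernel p₁) (ht : 0 < t) (hx : 1 < x) (hy : 1 < y) :
    p₁ t x y ≤ gaussianEnvelope t x y :=
  (H.le_pk ht hx hy).trans (pk_le_gaussianEnvelope ht (by linarith) (by linarith))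

lemma le_of_le_four (H : IsKilledBesselKernel p₁) (ht : 0 < t) (ht4 : t ≤ 4) (hx : 1 < x)
    (hy : 1 < y) : p₁ t x y ≤ 2 * ((x - 1) * (y - 1) / t) * gaussianEnvelope t x y :=
  (H.le_hker ht hx hy).trans (exp_mul_sqrt_mul_hker_le ht ht4 hx.le hy.le)

-- Since `t ≤ xy`, a point `x ≤ 2` forces `y ≥ t / 2`, so the mean `x + (y - x) / t` of the bridge
-- at time `1` is `O((y - 1) / t)`.
lemma le_of_le_two (H : IsKilledBesselKernel p₁) (ht : 4 ≤ t) (hx : 1 < x) (hx2 : x ≤ 2)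
    (hy : 1 < y) (hty : t ≤ x * y) :
    p₁ t x y ≤ 54 * ((x - 1) * (y - 1) / t) * gaussianEnvelope t x y := by
  have ht₁ : 0 < t - 1 := by linarith
  have hfirst (w : ℝ) (hw : 1 < w) :
      p₁ 1 x w ≤ 2 * (x - 1) * (w - 1) * gaussianEnvelope 1 x w :=
    (H.le_of_le_four one_pos (by norm_num) hx hw).trans_eq (by ring)
  have hsecond (w : ℝ) (hw : 1 < w) : p₁ (t - 1) w y ≤ gaussianEnvelope (t - 1) w y :=
    H.le_gaussianEnvelope ht₁ hw hy
  have hbridge := setIntegral_Ioi_mul_le_gaussianEnvelope (by linarith : 0 ≤ 2 * (x - 1))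
    zero_le_one one_pos ht₁ hx hy (fun w hw ↦ H.nonneg one_pos hx hw)
    (fun w hw ↦ H.nonneg ht₁ hw hy) hfirst hsecond
  rw [← H.ck one_pos ht₁ hx hy] at hbridge
  simp only [one_mul, add_sub_cancel] at hbridge
  have hmean : ((t - 1) * x + y) / t - 1 + √((t - 1) / t) ≤ 9 * ((y - 1) / t) := by
    have hvar : √((t - 1) / t) ≤ 1 := sqrt_le_one.2 ((div_le_one (by linarith)).2 (by linarith))
    have hmean_eq : ((t - 1) * x + y) / t = x + (y - x) / t := by field_simp; ring
    have hslope : (y - x) / t ≤ (y - 1) / t := by gcongr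
    have hquarter : 1 / 4 ≤ (y - 1) / t := by
      rw [div_le_div_iff₀ (by norm_num) (by linarith)]
      nlinarith
    linarith
  have hpi : √(2 * π) ≤ 3 := sqrt_le_iff.2 ⟨by norm_num, by linarith [pi_le_four]⟩
  have henv := gaussianEnvelope_nonneg t x y
  have : 0 ≤ x - 1 := by linarith
  calc p₁ t x y
      ≤ 2 * (x - 1) * √(2 * π) * gaussianEnvelope t x y *
          (((t - 1) * x + y) / t - 1 + √((t - 1) / t)) := hbridge
    _ ≤ 2 * (x - 1) * √(2 * π) * gaussianEnvelope t x y * (9 * ((y - 1) / t)) := by gcongr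
    _ ≤ 2 * (x - 1) * 3 * gaussianEnvelope t x y * (9 * ((y - 1) / t)) := by gcongr
    _ = 54 * ((x - 1) * (y - 1) / t) * gaussianEnvelope t x y := by ring

lemma le_boundary_factor_mul (H : IsKilledBesselKernel p₁) (ht : 0 < t) (hx : 1 < x) (hy : 1 < y)
    (hty : t ≤ x * y) :
    p₁ t x y ≤ 54 * ((x - 1) * (y - 1) / t) * gaussianEnvelope t x y := by
  have henv := gaussianEnvelope_nonneg t x y
  have hxy : 0 < (x - 1) * (y - 1) := mul_pos (sub_pos.2 hx) (sub_pos.2 hy)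
  rcases le_total t 4 with ht4 | ht4
  · refine (H.le_of_le_four ht ht4 hx hy).trans ?_
    gcongr
    norm_num
  rcases le_total x 2 with hx2 | hx2
  · exact H.le_of_le_two ht4 hx hx2 hy hty
  rcases le_total y 2 with hy2 | hy2
  · rw [H.symm ht hx hy, gaussianEnvelope_comm, mul_comm (x - 1)]
    exact H.le_of_le_two ht4 hy hy2 hx (by linarith)
  · have hfactor : 1 ≤ 54 * ((x - 1) * (y - 1) / t) := by
      rw [← mul_div_assoc, one_le_div ht]
      nlinarith
    calc p₁ t x y ≤ gaussianEnvelope t x y := H.le_gaussianEnvelope ht hx hy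
      _ ≤ _ := le_mul_of_one_le_left henv hfactor

end IsKilledBesselKernel

theorem bessel_heat_kernel_upper_bound_large_general {p₁ : ℝ → ℝ → ℝ → ℝ}
    (H : IsKilledBesselKernel p₁) {t x y : ℝ} (ht : 0 < t) (hx : 1 < x) (hy : 1 < y)
    (hty : t ≤ x * y) :
    p₁ t x y ≤ 54 * (min 1 ((x - 1) * (y - 1) / t) * (√(x * y * t))⁻¹ *
      exp (-(x - y) ^ 2 / (2 * t))) := by
  have henv := gaussianEnvelope_nonneg t x y
  have hinterior := H.le_gaussianEnvelope ht hx hy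
  have hboundary := H.le_boundary_factor_mul ht hx hy hty
  rw [mul_assoc (min _ _), ← gaussianEnvelope]
  rcases min_choice 1 ((x - 1) * (y - 1) / t) with hmin | hmin <;> rw [hmin]
  · linarith
  · linarith

theorem bessel_heat_kernel_upper_bound_large (p₁ : ℝ → ℝ → ℝ → ℝ) (q : ℝ → ℝ → ℝ)
    (H : BesselHK p₁ q) :
    ∃ C₂ : ℝ, 0 < C₂ ∧ ∀ t x y : ℝ, 0 < t → 1 < x → 1 < y → t ≤ x*y →
      p₁ t x y ≤ C₂ * (min 1 ((x-1)*(y-1)/t) * (Real.sqrt (x*y*t))⁻¹ *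
        Real.exp (-(x-y)^2/(2*t))) := by
  exact ⟨54, by norm_num, fun _ _ _ ↦
    bessel_heat_kernel_upper_bound_large_general H.isKilledBesselKernel⟩
end

section
/- Let t, y > 0 satisfy y² ≥ 4t. Then the function x ↦ p(t,x,y) is strictly increasing on the interval (1, y/2): if 1 < x₁ < x₂ < y/2 then p(t,x₁,y) < p(t,x₂,y). -/
open Real MeasureTheory

/-!
The function `x ↦ p(t,x,y)` has derivative proportional to `y I₁(z) - x I₀(z)` at `z = xy/t`.  Since
`z I₀(z) = 2 I₁(z) + z I₂(z)` and `I₂ < I₁`, one has `z I₀(z) < (z + 2) I₁(z)`, so the derivative is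
positive as soon as `z + 2 ≤ y²/t`, that is, for `0 < x ≤ y - 2t/y`.  This range contains
`(1, y/2)` when `y² ≥ 4t`.

Writing `Iₙ(z) = (z/2)ⁿ Cₙ(z²/4)` with the Bessel–Clifford functions `Cₙ` reduces the calculus to
`Cₙ' = Cₙ₊₁`; the comparison of consecutive orders is AM-GM applied term by term.
-/

/-- The Bessel–Clifford function `Cₙ(w) = ∑ₖ wᵏ / (k! (k + n)!)` of order `n : ℕ`.  It carries the
power series of the modified Bessel function: `Iₙ(z) = (z/2)ⁿ Cₙ((z/2)²)`. -/
noncomputable def besselClifford (n : ℕ) (w : ℝ) : ℝ :=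
  ∑' k : ℕ, w ^ k / ((k.factorial : ℝ) * ((k + n).factorial : ℝ))

section BesselClifford

variable (n : ℕ)

lemma hasSum_besselClifford (w : ℝ) :
    HasSum (fun k : ℕ ↦ w ^ k / ((k.factorial : ℝ) * ((k + n).factorial : ℝ)))
      (besselClifford n w) := by
  refine ((Real.summable_pow_div_factorial |w|).of_norm_bounded fun k ↦ ?_).hasSum
  have hfactorial : (1 : ℝ) ≤ (k + n).factorial := mod_cast (k + n).factorial_pos
  rw [norm_div, norm_pow, Real.norm_eq_abs, Real.norm_of_nonneg (by positivity)]
  gcongr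
  exact le_mul_of_one_le_right (by positivity) hfactorial

lemma besselClifford_pos {w : ℝ} (hw : 0 ≤ w) : 0 < besselClifford n w :=
  (hasSum_besselClifford n w).summable.tsum_pos (fun k ↦ by positivity) 0 (by positivity)

lemma besselClifford_deriv_term_succ (w : ℝ) (k : ℕ) :
    ((k + 1 : ℕ) : ℝ) * w ^ (k + 1 - 1) /
        (((k + 1).factorial : ℝ) * ((k + 1 + n).factorial : ℝ)) =
      w ^ k / ((k.factorial : ℝ) * ((k + (n + 1)).factorial : ℝ)) := by
  rw [Nat.add_sub_cancel, Nat.factorial_succ, Nat.add_right_comm k 1 n, Nat.cast_mul, mul_assoc,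
    mul_div_mul_left _ _ (by positivity), add_assoc]

lemma hasSum_besselClifford_deriv (w : ℝ) :
    HasSum (fun k : ℕ ↦ (k : ℝ) * w ^ (k - 1) / ((k.factorial : ℝ) * ((k + n).factorial : ℝ)))
      (besselClifford (n + 1) w) := by
  rw [← hasSum_nat_add_iff' 1]
  simpa only [besselClifford_deriv_term_succ, Finset.sum_range_one, Nat.cast_zero, zero_mul,
    zero_div, sub_zero] using hasSum_besselClifford (n + 1) w

lemma hasDerivAt_besselClifford (w : ℝ) :
    HasDerivAt (besselClifford n) (besselClifford (n + 1) w) w := by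
  rw [← (hasSum_besselClifford_deriv n w).tsum_eq]
  refine hasDerivAt_tsum_of_isPreconnected
    (hasSum_besselClifford_deriv n (|w| + 1)).summable
    Metric.isOpen_ball (convex_ball (0 : ℝ) (|w| + 1)).isPreconnected
    (fun k v _ ↦ (hasDerivAt_pow k v).div_const _) (fun k v hv ↦ ?_)
    (Metric.mem_ball_self (by positivity)) (hasSum_besselClifford n 0).summable
    (by simp)
  have hv' : ‖v‖ ≤ |w| + 1 := (mem_ball_zero_iff.mp hv).le
  rw [norm_div, norm_mul, norm_mul, norm_pow, Real.norm_natCast, Real.norm_natCast,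
    Real.norm_natCast]
  gcongr

lemma besselClifford_recurrence (w : ℝ) :
    besselClifford n w = (n + 1) * besselClifford (n + 1) w + w * besselClifford (n + 2) w := by
  have hsum := ((hasSum_besselClifford (n + 1) w).mul_left ((n : ℝ) + 1)).add
    ((hasSum_besselClifford_deriv (n + 1) w).mul_left w)
  refine Eq.trans (tsum_congr fun k ↦ ?_) hsum.tsum_eq
  have hpow : w * ((k : ℝ) * w ^ (k - 1)) = k * w ^ k := by
    rcases k with _ | k
    · simp
    · rw [Nat.add_sub_cancel, pow_succ]
      ring
  have hfactorial : ((k + (n + 1)).factorial : ℝ) = (k + n + 1) * (k + n).factorial := by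
    rw [← add_assoc, Nat.factorial_succ]
    push_cast
    ring
  rw [← mul_div_assoc, ← mul_div_assoc, hpow, ← add_div, hfactorial]
  field_simp
  ring

lemma two_mul_besselClifford_term_le (u : ℝ) (k : ℕ) :
    2 * (u * ((u ^ 2) ^ k / ((k.factorial : ℝ) * ((k + (n + 1)).factorial : ℝ)))) ≤
      (u ^ 2) ^ k / ((k.factorial : ℝ) * ((k + n).factorial : ℝ)) +
        (u ^ 2) ^ (k + 1) / (((k + 1).factorial : ℝ) * ((k + 1 + n).factorial : ℝ)) := by
  have hamgm : 2 * u ≤ (k + n + 1) + u ^ 2 / (k + 1) := by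
    have hsq : u ^ 2 / (k + 1) + (k + 1) - 2 * u = (u - (k + 1)) ^ 2 / (k + 1) := by
      field_simp
      ring
    have hsq_nonneg : 0 ≤ (u - (k + 1)) ^ 2 / ((k : ℝ) + 1) := by positivity
    linarith [n.cast_nonneg (α := ℝ)]
  have hfactor : 0 ≤ (u ^ 2) ^ k / ((k.factorial : ℝ) * ((k + n + 1).factorial : ℝ)) := by
    positivity
  convert! mul_le_mul_of_nonneg_left hamgm hfactor using 1
  · rw [← add_assoc]
    ring
  · rw [Nat.add_right_comm k 1 n, Nat.factorial_succ k, Nat.factorial_succ (k + n)]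
    push_cast
    field_simp
    ring

lemma mul_besselClifford_succ_lt (u : ℝ) :
    u * besselClifford (n + 1) (u ^ 2) < besselClifford n (u ^ 2) := by
  have htail : HasSum (fun k : ℕ ↦
      (u ^ 2) ^ (k + 1) / (((k + 1).factorial : ℝ) * ((k + 1 + n).factorial : ℝ)))
      (besselClifford n (u ^ 2) - 1 / n.factorial) := by
    simpa using (hasSum_nat_add_iff' 1).mpr (hasSum_besselClifford n (u ^ 2))
  have hle : 2 * (u * besselClifford (n + 1) (u ^ 2)) ≤
      besselClifford n (u ^ 2) + (besselClifford n (u ^ 2) - 1 / n.factorial) :=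
    hasSum_le (two_mul_besselClifford_term_le n u)
      (((hasSum_besselClifford (n + 1) (u ^ 2)).mul_left u).mul_left 2)
      ((hasSum_besselClifford n (u ^ 2)).add htail)
  have hfirst : (0 : ℝ) < 1 / n.factorial := by positivity
  linarith

end BesselClifford

lemma I0_eq_besselClifford (z : ℝ) : I0 z = besselClifford 0 ((z / 2) ^ 2) :=
  tsum_congr fun k ↦ by rw [pow_mul, add_zero, sq (k.factorial : ℝ)]

lemma I1_eq_besselClifford (z : ℝ) : I1 z = z / 2 * besselClifford 1 ((z / 2) ^ 2) := by
  rw [I1, besselClifford, ← tsum_mul_left]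
  refine tsum_congr fun k ↦ ?_
  rw [pow_succ', pow_mul, mul_div_assoc]

lemma I1_pos {z : ℝ} (hz : 0 < z) : 0 < I1 z := by
  rw [I1_eq_besselClifford]
  exact mul_pos (half_pos hz) (besselClifford_pos 1 (sq_nonneg _))

lemma mul_I0_lt_add_two_mul_I1 {z : ℝ} (hz : 0 < z) : z * I0 z < (z + 2) * I1 z := by
  set C₁ := besselClifford 1 ((z / 2) ^ 2) with hC₁
  set C₂ := besselClifford 2 ((z / 2) ^ 2)
  have hrecurrence : I0 z = C₁ + (z / 2) ^ 2 * C₂ := by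
    simpa using (I0_eq_besselClifford z).trans (besselClifford_recurrence 0 ((z / 2) ^ 2))
  have hlt : z / 2 * C₂ < C₁ := mul_besselClifford_succ_lt 1 (z / 2)
  calc z * I0 z = z * (C₁ + z / 2 * (z / 2 * C₂)) := by rw [hrecurrence]; ring
    _ < z * (C₁ + z / 2 * C₁) := by gcongr
    _ = (z + 2) * I1 z := by rw [I1_eq_besselClifford, ← hC₁]; ring

lemma hasDerivAt_pk {t : ℝ} (ht : t ≠ 0) (x y : ℝ) :
    HasDerivAt (fun x ↦ pk t x y)
      ((t ^ 2)⁻¹ * Real.exp (-(x ^ 2 + y ^ 2) / (2 * t)) *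
        (y * I1 (x * y / t) - x * I0 (x * y / t))) x := by
  have hexponent : HasDerivAt (fun x : ℝ ↦ -(x ^ 2 + y ^ 2) / (2 * t)) (-(x / t)) x :=
    ((((hasDerivAt_pow 2 x).add_const (y ^ 2)).neg).div_const (2 * t)).congr_deriv
      (by field_simp; simp)
  have harg : HasDerivAt (fun x : ℝ ↦ x * y / t) (y / t) x := by
    simpa using ((hasDerivAt_id x).mul_const y).div_const t
  refine ((hexponent.exp.const_mul t⁻¹).mul ((hasDerivAt_I0 _).comp x harg)).congr_deriv ?_
  simp only [Function.comp_apply]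
  field_simp
  ring

lemma mul_I0_lt_mul_I1 {t x y : ℝ} (ht : 0 < t) (hx : 0 < x) (hy : 0 < y)
    (hxy : x ≤ y - 2 * t / y) : x * I0 (x * y / t) < y * I1 (x * y / t) := by
  have hz : 0 < x * y / t := by positivity
  calc x * I0 (x * y / t) = t / y * (x * y / t * I0 (x * y / t)) := by field_simp
    _ < t / y * ((x * y / t + 2) * I1 (x * y / t)) :=
      mul_lt_mul_of_pos_left (mul_I0_lt_add_two_mul_I1 hz) (by positivity)
    _ = (x + 2 * t / y) * I1 (x * y / t) := by field_simp
    _ ≤ y * I1 (x * y / t) :=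
      mul_le_mul_of_nonneg_right (le_sub_iff_add_le.mp hxy) (I1_pos hz).le

theorem bessel_heat_kernel_monotone_general {t y : ℝ} (ht : 0 < t) (hy : 0 < y) :
    StrictMonoOn (fun x ↦ pk t x y) (Set.Icc 0 (y - 2 * t / y)) := by
  refine strictMonoOn_of_deriv_pos (convex_Icc _ _)
    (fun x _ ↦ (hasDerivAt_pk ht.ne' x y).continuousAt.continuousWithinAt) fun x hx ↦ ?_
  rw [interior_Icc] at hx
  rw [(hasDerivAt_pk ht.ne' x y).deriv]
  have hpos := sub_pos.mpr (mul_I0_lt_mul_I1 ht hx.1 hy hx.2.le)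
  positivity

theorem bessel_heat_kernel_monotone :
    ∀ t y : ℝ, 0 < t → 0 < y → 4*t ≤ y^2 →
      ∀ x₁ x₂ : ℝ, 1 < x₁ → x₁ < x₂ → x₂ < y/2 → pk t x₁ y < pk t x₂ y := by
  intro t y ht hy hty x₁ x₂ hx₁ hx₁₂ hx₂
  have hx₂_le : x₂ ≤ y - 2 * t / y := by
    have : 2 * t / y ≤ y / 2 := by
      rw [div_le_iff₀ hy]
      linarith
    linarith
  exact bessel_heat_kernel_monotone_general ht hy ⟨by linarith, by linarith⟩
    ⟨by linarith, hx₂_le⟩ hx₁₂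
end
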